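/- Assume the Riemann Hypothesis. Let q : [1, ∞) → ℂ be a continuous function with q(x) → 0 as x → +∞. Then there exists a completely multiplicative function χ : ℕ → {1, e^{2πi/3}, e^{-2πi/3}} such that the function s ↦ ∫_1^∞ q(x) x^{-s} dx − ∑_p χ(p) p^{-s} log p (the sum ranging over all primes p), initially defined and analytic in the half-plane Re s > 1, extends analytically to the half-plane Re s > 1/2. -/

import Mathlib

/-!
Write `Φ(x) = ∫_1^x q`. By partial summation the difference of the two transforms equals
`s ∫_1^∞ (Φ(x) - ∑_{p ≤ x} χ(p) log p) x ^ (-s - 1) dx` for `Re s > 1`, so it suffices to choose the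
cube roots of unity `χ(p)` such that the error `Φ(x) - ∑_{p ≤ x} χ(p) log p` is
`O(x ^ (1/2 + ε))` for every `ε > 0`; the values on primes then extend freely to a completely
multiplicative function.

The choice is greedy. For every `v : ℂ` some cube root of unity `ω` satisfies
`Re (v ω̄) ≥ |v| / 2`, hence `|v - ω L| ≤ max (2 L) (|v| - L / 4)`
(`norm_sub_cubeChoice_le`). Taking `v` to be the current error and `L = log p` at each prime `p`,
let `m` be the last time the first alternative occurred: since then the error has grown by at most
`∑_{m ≤ k < n} |Φ(k + 1) - Φ(k)| - (θ(n) - θ(m)) / 4` (`norm_greedy_error_le`). As `q → 0`, the sum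
is at most `(n - m) / 4 + O(1)`, and `θ(n) - θ(m) = n - m + O(n ^ (1/2 + ε))` on RH, so the error is
`O(n ^ (1/2 + ε))`.

The estimate `θ(x) = x + O(x ^ (1/2 + ε))` (`abs_theta_sub_le`) is derived from RH as follows. With
`ζ₁(s) = (s - 1) ζ(s)`, which has no zeros and polynomial growth in `Re s > 1/2`,
Borel–Carathéodory and Cauchy's estimate give `ζ₁'/ζ₁ = O((1 + |t|) ^ δ)`
(`norm_logDeriv_zeta1_le`). The Perron formula for the smoothed sum `∑ Λ(n) (x - n)₊`
(`hasSum_vonMangoldt_perron`) is moved to the line `Re s = 1/2 + ε/2` and differenced between `x`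
and `x + 1`; the resulting quantity lies between `ψ(x)` and `ψ(x + 1)`.
-/

open Complex Filter Set MeasureTheory

/-- A completely multiplicative function: `χ 1 = 1` and `χ (m*n) = χ m * χ n`. -/
def CompletelyMultiplicative (χ : ℕ → ℂ) : Prop :=
  χ 1 = 1 ∧ ∀ m n : ℕ, χ (m * n) = χ m * χ n

/-! ### Integrals `∫ D(t) t ^ (-s - 1) dt` and the growth of `(s - 1) ζ(s)` -/

/-- A measurable function of size `O(t ^ a)` on `[1, ∞)` has an integrable Dirichlet-type kernel. -/
lemma integrableOn_mul_cpow {D : ℝ → ℂ} (hD : Measurable D) {C a : ℝ}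
    (hb : ∀ t : ℝ, 1 ≤ t → ‖D t‖ ≤ C * t ^ a) {s : ℂ} (hs : a < s.re) :
    IntegrableOn (fun t : ℝ => D t * (t : ℂ) ^ (-(s + 1))) (Ioi 1) := by
  have h1 : IntegrableOn (fun t : ℝ => C * t ^ (a - s.re - 1)) (Ioi 1) :=
    (integrableOn_Ioi_rpow_of_lt (by linarith) one_pos).const_mul C
  refine Integrable.mono' h1 ?_ ?_
  · refine Measurable.aestronglyMeasurable ?_
    fun_prop
  · refine (ae_restrict_iff' measurableSet_Ioi).2 (Eventually.of_forall fun t ht => ?_)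
    have ht' : (1 : ℝ) < t := ht
    have ht0 : 0 < t := by linarith
    rw [norm_mul, Complex.norm_cpow_eq_rpow_re_of_pos ht0]
    have : a - s.re - 1 = a + (-(s + 1)).re := by simp; ring
    rw [this, Real.rpow_add ht0, ← mul_assoc]
    exact mul_le_mul_of_nonneg_right (hb t ht'.le) (by positivity)

/-- The integral is the Mellin transform at `-s` of `D` cut off to `(1, ∞)`. -/
lemma differentiableAt_integral_mul_cpow {D : ℝ → ℂ} (hD : Measurable D) {C a : ℝ}
    (hb : ∀ t : ℝ, 1 ≤ t → ‖D t‖ ≤ C * t ^ a) {s : ℂ} (hs : a < s.re) :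
    DifferentiableAt ℂ (fun s : ℂ => ∫ t in Ioi (1 : ℝ), D t * (t : ℂ) ^ (-(s + 1))) s := by
  set f : ℝ → ℂ := indicator (Ioi 1) D with hf
  have hfm : Measurable f := hD.indicator measurableSet_Ioi
  have hC : 0 ≤ C := by
    have := (norm_nonneg _).trans (hb 1 le_rfl)
    simpa using this
  have hfb : ∀ t : ℝ, 0 < t → ‖f t‖ ≤ C * t ^ a := by
    intro t ht
    by_cases h : t ∈ Ioi (1 : ℝ)
    · rw [hf, indicator_of_mem h]; exact hb t (le_of_lt h)
    · rw [hf, indicator_of_notMem h]; simp; positivity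
  have key : (fun s : ℂ => ∫ t in Ioi (1 : ℝ), D t * (t : ℂ) ^ (-(s + 1))) =
      fun s => mellin f (-s) := by
    funext z
    have : ∀ t : ℝ, (t : ℂ) ^ (-z - 1) • f t =
        indicator (Ioi 1) (fun t : ℝ => D t * (t : ℂ) ^ (-(z + 1))) t := by
      intro t
      by_cases h : t ∈ Ioi (1 : ℝ)
      · rw [hf, indicator_of_mem h, indicator_of_mem h, smul_eq_mul, mul_comm]
        congr 2; ring
      · rw [hf, indicator_of_notMem h, indicator_of_notMem h, smul_zero]
    simp only [mellin, this]
    rw [setIntegral_indicator measurableSet_Ioi]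
    congr 2
    ext t; simp only [mem_inter_iff, mem_Ioi]; constructor
    · intro h; exact ⟨by linarith, h⟩
    · exact fun h => h.2
  rw [key]
  have hd : DifferentiableAt ℂ (mellin f) (-s) := by
    refine mellin_differentiableAt_of_isBigO_rpow (a := -a) (b := (-s).re - 1) ?_ ?_ (by simpa using hs)
      ?_ (by linarith)
    · have hg : LocallyIntegrableOn (fun t : ℝ => C * t ^ a) (Ioi 0) := by
        refine ContinuousOn.locallyIntegrableOn ?_ measurableSet_Ioi
        exact continuousOn_const.mul
          (continuousOn_id.rpow_const fun t ht => Or.inl (ne_of_gt ht))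
      intro t ht
      obtain ⟨u, hu, hi⟩ := hg t ht
      refine ⟨u ∩ Ioi 0, inter_mem hu self_mem_nhdsWithin, ?_⟩
      refine Integrable.mono' (hi.mono_set inter_subset_left) hfm.aestronglyMeasurable ?_
      refine ae_restrict_of_ae_restrict_of_subset inter_subset_right ?_
      exact (ae_restrict_iff' measurableSet_Ioi).2 (Eventually.of_forall fun x hx => hfb x hx)
    · refine Asymptotics.IsBigO.of_bound C ?_
      filter_upwards [eventually_gt_atTop 0] with t ht
      rw [neg_neg, Real.norm_of_nonneg (by positivity)]
      exact hfb t ht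
    · refine Asymptotics.IsBigO.of_bound 0 ?_
      have : ∀ᶠ t : ℝ in nhdsWithin 0 (Ioi 0), t < 1 :=
        nhdsWithin_le_nhds (eventually_lt_nhds one_pos)
      filter_upwards [this] with t ht
      rw [hf, indicator_of_notMem (by simp; linarith)]
      simp
  exact hd.comp s differentiableAt_id.neg

/-- The analytic continuation of `(s - 1) ζ(s)` to `Re s > 0` by partial summation. -/
lemma zeta1_eq {s : ℂ} (hs : 0 < s.re) :
    riemannZeta₁ s = s + s * (s - 1) *
      ∫ t in Ioi (1 : ℝ), (((⌊t⌋₊ : ℝ) - t : ℝ) : ℂ) * (t : ℂ) ^ (-(s + 1)) := by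
  set D : ℝ → ℂ := fun t => (((⌊t⌋₊ : ℝ) - t : ℝ) : ℂ) with hDdef
  have hD : Measurable D := by
    refine Complex.measurable_ofReal.comp ?_
    exact (measurable_from_nat.comp Nat.measurable_floor).sub measurable_id
  have hb : ∀ t : ℝ, 1 ≤ t → ‖D t‖ ≤ 1 * t ^ (0 : ℝ) := by
    intro t ht
    simp only [hDdef, Complex.norm_real, Real.rpow_zero, mul_one, Real.norm_eq_abs]
    rw [abs_le]
    constructor
    · have := Nat.lt_floor_add_one t; linarith
    · have := Nat.floor_le (by linarith : 0 ≤ t); linarith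
  have hU : IsOpen {s : ℂ | 0 < s.re} := isOpen_lt continuous_const Complex.continuous_re
  have hconv : IsPreconnected {s : ℂ | 0 < s.re} := (convex_halfSpace_re_gt 0).isPreconnected
  have h1 : AnalyticOnNhd ℂ riemannZeta₁ {s : ℂ | 0 < s.re} :=
    differentiable_riemannZeta₁.differentiableOn.analyticOnNhd hU
  have h2 : AnalyticOnNhd ℂ (fun s : ℂ => s + s * (s - 1) *
      ∫ t in Ioi (1 : ℝ), D t * (t : ℂ) ^ (-(s + 1))) {s : ℂ | 0 < s.re} := by
    refine DifferentiableOn.analyticOnNhd (fun z hz => ?_) hU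
    have := differentiableAt_integral_mul_cpow hD hb hz
    exact (differentiableAt_id.add
      ((differentiableAt_id.mul (differentiableAt_id.sub_const 1)).mul this)).differentiableWithinAt
  refine h1.eqOn_of_preconnected_of_eventuallyEq h2 hconv (z₀ := 2) (by simp) ?_ hs
  have hmem : {s : ℂ | 1 < s.re} ∈ nhds (2 : ℂ) :=
    (isOpen_lt continuous_const Complex.continuous_re).mem_nhds (by simp)
  filter_upwards [hmem] with z hz
  have hz' : 1 < z.re := hz
  have hz1 : z - 1 ≠ 0 := by
    intro h; have := congrArg Complex.re h; simp at this; linarith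
  have hz0 : z ≠ 0 := by
    intro h; rw [h] at hz'; simp at hz'; linarith
  have hL := LSeries_eq_mul_integral' (1 : ℕ → ℂ) zero_le_one hz' (by
    simpa using Asymptotics.isBigO_refl _ _)
  rw [LSeries_one_eq_riemannZeta hz'] at hL
  have h_int : ∫ t in Ioi (1 : ℝ), (∑ k ∈ Finset.Icc 1 ⌊t⌋₊, (1 : ℕ → ℂ) k) * (t : ℂ) ^ (-(z + 1)) =
      (∫ t in Ioi (1 : ℝ), D t * (t : ℂ) ^ (-(z + 1))) + 1 / (z - 1) := by
    have e1 : ∫ t in Ioi (1 : ℝ), (t : ℂ) ^ (-z) = 1 / (z - 1) := by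
      rw [integral_Ioi_cpow_of_lt (by simpa using hz') one_pos]
      rw [Complex.ofReal_one, Complex.one_cpow, show -z + 1 = -(z - 1) by ring, neg_div_neg_eq]
    rw [← e1, ← integral_add (integrableOn_mul_cpow hD hb (by linarith))
      (integrableOn_Ioi_cpow_of_lt (by simpa using hz') one_pos)]
    refine setIntegral_congr_fun measurableSet_Ioi fun t ht => ?_
    have ht' : (1 : ℝ) < t := ht
    have ht0 : (t : ℂ) ≠ 0 := by exact_mod_cast (by linarith : t ≠ 0)
    have : (t : ℂ) ^ (-z) = t * (t : ℂ) ^ (-(z + 1)) := by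
      rw [show -z = 1 + -(z + 1) by ring, Complex.cpow_add _ _ ht0, Complex.cpow_one]
    simp only [this, hDdef]
    push_cast
    simp
    ring
  have hne : z ≠ 1 := sub_ne_zero.1 hz1
  have hz1' := riemannZeta_eq_inv_sub_mul hne
  have : riemannZeta₁ z = (z - 1) * riemannZeta z := by rw [hz1']; field_simp
  rw [this, hL, h_int]
  field_simp
  ring

/-- Polynomial growth of `(s - 1) ζ(s)`, the input for Borel–Carathéodory. -/
lemma norm_zeta1_le {s : ℂ} (hs : 1 / 2 < s.re) :
    ‖riemannZeta₁ s‖ ≤ ‖s‖ + 2 * ‖s‖ * ‖s - 1‖ := by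
  rw [zeta1_eq (by linarith)]
  have hI : ‖∫ t in Ioi (1 : ℝ), (((⌊t⌋₊ : ℝ) - t : ℝ) : ℂ) * (t : ℂ) ^ (-(s + 1))‖ ≤ 2 := by
    have h1 : ∫ t in Ioi (1 : ℝ), t ^ (-(3 / 2) : ℝ) = 2 := by
      rw [integral_Ioi_rpow_of_lt (by norm_num) one_pos]; norm_num
    rw [← h1]
    refine norm_integral_le_of_norm_le (integrableOn_Ioi_rpow_of_lt (by norm_num) one_pos) ?_
    refine (ae_restrict_iff' measurableSet_Ioi).2 (Eventually.of_forall fun t ht => ?_)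
    have ht' : (1 : ℝ) < t := ht
    have ht0 : 0 < t := by linarith
    rw [norm_mul, Complex.norm_cpow_eq_rpow_re_of_pos ht0, Complex.norm_real, Real.norm_eq_abs]
    have ha : |(⌊t⌋₊ : ℝ) - t| ≤ 1 := by
      rw [abs_le]
      constructor
      · have := Nat.lt_floor_add_one t; linarith
      · have := Nat.floor_le ht0.le; linarith
    calc _ ≤ 1 * t ^ (-(s + 1)).re := by gcongr
      _ ≤ t ^ (-(3 / 2) : ℝ) := by
        rw [one_mul]
        exact Real.rpow_le_rpow_of_exponent_le ht'.le (by simp; linarith)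
  calc _ ≤ ‖s‖ + ‖s * (s - 1) * _‖ := norm_add_le _ _
    _ ≤ ‖s‖ + ‖s‖ * ‖s - 1‖ * 2 := by
      rw [norm_mul, norm_mul]; gcongr
    _ = _ := by ring

/-! ### The logarithmic derivative of `(s - 1) ζ(s)` on RH -/

/-- A lower bound at the centres of the discs used for Borel–Carathéodory: the terms `n ≥ 2` of the
series contribute at most `π² / 6 - 1 < 3 / 4`. -/
lemma norm_zeta_two_ge (t : ℝ) : 1 / 4 ≤ ‖riemannZeta (2 + t * I)‖ := by
  have hre : ((2 : ℂ) + t * I).re = 2 := by simp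
  have hz := zeta_eq_tsum_one_div_nat_add_one_cpow (s := 2 + t * I) (by rw [hre]; norm_num)
  have h2 : HasSum (fun n : ℕ => 1 / ((n : ℝ) + 1) ^ 2) (Real.pi ^ 2 / 6) := by
    have := (hasSum_nat_add_iff' 1).2 hasSum_zeta_two
    simpa using this
  have hn : ∀ n : ℕ, ‖1 / ((n : ℂ) + 1) ^ (2 + t * I)‖ = 1 / ((n : ℝ) + 1) ^ 2 := by
    intro n
    rw [norm_div, norm_one, show ((n : ℂ) + 1) = (((n : ℝ) + 1 : ℝ) : ℂ) by push_cast; rfl,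
      Complex.norm_cpow_eq_rpow_re_of_pos (by positivity), hre]
    norm_num
  have hs : Summable fun n : ℕ => 1 / ((n : ℂ) + 1) ^ (2 + t * I) := by
    refine Summable.of_norm ?_
    simp_rw [hn]; exact h2.summable
  rw [hs.tsum_eq_zero_add] at hz
  have htail : ‖∑' n : ℕ, 1 / (((n + 1 : ℕ) : ℂ) + 1) ^ (2 + t * I)‖ ≤ Real.pi ^ 2 / 6 - 1 := by
    have h3 : HasSum (fun n : ℕ => 1 / (((n + 1 : ℕ) : ℝ) + 1) ^ 2) (Real.pi ^ 2 / 6 - 1) := by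
      have := (hasSum_nat_add_iff' 1).2 h2
      simpa using this
    refine tsum_of_norm_bounded h3 fun n => ?_
    rw [hn]
  have hpi : Real.pi ^ 2 / 6 - 1 ≤ 3 / 4 := by
    have := Real.pi_lt_d2
    have := Real.pi_pos
    nlinarith
  rw [hz]
  simp only [Nat.cast_zero, zero_add, Complex.one_cpow, div_one]
  have h4 := norm_sub_le_norm_add (1 : ℂ) (∑' n : ℕ, 1 / (((n + 1 : ℕ) : ℂ) + 1) ^ (2 + t * I))
  rw [norm_one] at h4
  linarith

lemma zeta1_eq_mul {s : ℂ} (hs : s ≠ 1) : riemannZeta₁ s = (s - 1) * riemannZeta s := by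
  rw [riemannZeta_eq_inv_sub_mul hs]
  have := sub_ne_zero.2 hs
  field_simp

lemma zeta1_ne_zero (hRH : RiemannHypothesis) {s : ℂ} (hs : 1 / 2 < s.re) :
    riemannZeta₁ s ≠ 0 := by
  rcases eq_or_ne s 1 with rfl | h1
  · simp
  · rw [zeta1_eq_mul h1]
    refine mul_ne_zero (sub_ne_zero.2 h1) fun h0 => ?_
    have := hRH s h0 (by
      rintro ⟨n, rfl⟩
      have : ((-2 : ℂ) * (n + 1)).re = -2 * ((n : ℝ) + 1) := by simp
      rw [this] at hs
      have : (0 : ℝ) ≤ n := n.cast_nonneg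
      linarith) h1
    linarith

/-- The logarithmic derivative of a zero-free holomorphic function is controlled by the maximum of
its modulus on a larger disc: Borel–Carathéodory applied to a branch of the logarithm, followed by
Cauchy's estimate. -/
lemma norm_logDeriv_le {g : ℂ → ℂ} {c s : ℂ} {R η M : ℝ} (hη : 0 < η) (hM : 0 < M)
    (hg : DifferentiableOn ℂ g (Metric.ball c R)) (hg0 : ∀ z ∈ Metric.ball c R, g z ≠ 0)
    (hgM : ∀ z ∈ Metric.ball c R, ‖g z‖ ≤ Real.exp M * ‖g c‖)
    (hs : ‖s - c‖ + 2 * η ≤ R) :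
    ‖deriv g s / g s‖ ≤ 2 * M * R / η ^ 2 := by
  have hR : 0 < R := by have := norm_nonneg (s - c); linarith
  have hcB : c ∈ Metric.ball c R := Metric.mem_ball_self hR
  have hld : DifferentiableOn ℂ (fun z => deriv g z / g z) (Metric.ball c R) :=
    (hg.deriv Metric.isOpen_ball).div hg hg0
  obtain ⟨f, hfc, hf⟩ := hld.isExactOn_ball.with_val_at c 0
  have hfd : DifferentiableOn ℂ f (Metric.ball c R) := fun z hz =>
    (hf z hz).differentiableAt.differentiableWithinAt
  have hgd : ∀ z ∈ Metric.ball c R, HasDerivAt g (deriv g z) z := fun z hz =>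
    (hg.differentiableAt (Metric.isOpen_ball.mem_nhds hz)).hasDerivAt
  -- `f` is a branch of `log (g / g c)`
  have hconst : ∀ z ∈ Metric.ball c R, g z * cexp (-f z) = g c := by
    intro z hz
    have hder : ∀ z ∈ Metric.ball c R, HasDerivAt (fun z => g z * cexp (-f z)) 0 z := by
      intro z hz
      have h1 := (hgd z hz).mul ((hf z hz).neg.cexp)
      have h2 : deriv g z * cexp ((-f) z) + g z * (cexp ((-f) z) * -(deriv g z / g z)) = 0 := by
        have := hg0 z hz
        field_simp
        ring
      rw [h2] at h1
      exact h1
    have := Metric.isOpen_ball.is_const_of_deriv_eq_zero (convex_ball c R).isPreconnected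
      (fun z hz => (hder z hz).differentiableAt.differentiableWithinAt)
      (fun z hz => (hder z hz).deriv) hz hcB
    simpa [hfc] using this
  have hre : ∀ z ∈ Metric.ball c R, (f z).re ≤ M := by
    intro z hz
    have h1 := hconst z hz
    have h2 : g z = g c * cexp (f z) := by
      rw [← h1, mul_assoc, ← Complex.exp_add]; simp
    have h3 := hgM z hz
    rw [h2, norm_mul, Complex.norm_exp, mul_comm] at h3
    have h4 : 0 < ‖g c‖ := norm_pos_iff.2 (hg0 c hcB)
    exact Real.exp_le_exp.1 (le_of_mul_le_mul_right h3 h4)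
  have hbc : ∀ z : ℂ, ‖z - c‖ + η ≤ R → ‖f z‖ ≤ 2 * M * R / η := by
    intro z hz
    have hmap : ∀ w ∈ Metric.ball (0 : ℂ) R, w + c ∈ Metric.ball c R := by
      intro w hw; simpa using hw
    have hF : DifferentiableOn ℂ (fun w => f (w + c)) (Metric.ball 0 R) :=
      hfd.comp (differentiableOn_id.add_const c) hmap
    have := Complex.borelCaratheodory_zero (f := fun w => f (w + c)) (R := R) (z := z - c) hM hF
      (fun w hw => hre _ (hmap w hw)) hR (by rw [mem_ball_zero_iff]; linarith) (by simpa using hfc)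
    simp only [sub_add_cancel] at this
    refine this.trans ?_
    have := norm_nonneg (z - c)
    gcongr
    · linarith
    · linarith
  have hsB : s ∈ Metric.ball c R := by rw [mem_ball_iff_norm]; linarith
  have hcl : Metric.closedBall s η ⊆ Metric.ball c R := by
    intro z hz
    rw [mem_closedBall_iff_norm] at hz
    rw [mem_ball_iff_norm]
    have := norm_sub_le_norm_sub_add_norm_sub z s c
    linarith
  have := Complex.norm_deriv_le_of_forall_mem_sphere_norm_le (f := f) (c := s) hη
    ((hfd.mono hcl).diffContOnCl_ball subset_rfl) (C := 2 * M * R / η) (fun z hz => by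
      apply hbc
      rw [mem_sphere_iff_norm] at hz
      have := norm_sub_le_norm_sub_add_norm_sub z s c
      linarith)
  rw [(hf s hsB).deriv] at this
  refine this.trans (le_of_eq ?_)
  field_simp

/-- On RH, `(ζ₁'/ζ₁)(σ + it) = O((1 + |t|) ^ δ)` uniformly for `1/2 + ε ≤ σ ≤ 2`, where
`ζ₁(s) = (s - 1) ζ(s)`. -/
lemma norm_logDeriv_zeta1_le (hRH : RiemannHypothesis) {ε δ : ℝ} (hε : 0 < ε) (hδ : 0 < δ) :
    ∃ C : ℝ, 0 < C ∧ ∀ s : ℂ, 1 / 2 + ε ≤ s.re → s.re ≤ 2 →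
      ‖deriv riemannZeta₁ s / riemannZeta₁ s‖ ≤ C * (1 + |s.im|) ^ δ := by
  refine ⟨2 * (Real.log 200 + 2 / δ) * (3 / 2) / (ε / 2) ^ 2, ?_, fun s h1 h2 => ?_⟩
  · have : 0 < Real.log 200 := Real.log_pos (by norm_num)
    positivity
  set t := s.im with ht
  have htn := abs_nonneg t
  set c : ℂ := 2 + t * I with hc
  set M : ℝ := Real.log (200 * (1 + |t|) ^ 2) with hM
  have hbig : 1 < 200 * (1 + |t|) ^ 2 := by nlinarith
  have hMpos : 0 < M := Real.log_pos hbig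
  have hball : ∀ z ∈ Metric.ball c (3 / 2), 1 / 2 < z.re ∧ ‖z - c‖ < 3 / 2 := by
    intro z hz
    rw [mem_ball_iff_norm] at hz
    have h3 := (Complex.abs_re_le_norm (z - c)).trans_lt hz
    have h4 : (z - c).re = z.re - 2 := by simp [hc]
    rw [h4, abs_lt] at h3
    exact ⟨by linarith, hz⟩
  have hcn : ‖c‖ ≤ 2 + |t| := by
    refine (norm_add_le _ _).trans ?_
    simp
  have hc1 : 1 ≤ ‖c - 1‖ := by
    have := Complex.abs_re_le_norm (c - 1)
    have h4 : (c - 1).re = 1 := by simp [hc]; norm_num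
    rwa [h4, abs_one] at this
  have hgc : 1 / 4 ≤ ‖riemannZeta₁ c‖ := by
    have hne : c ≠ 1 := by
      intro h; rw [h] at hc1; simp at hc1; linarith
    rw [zeta1_eq_mul hne, norm_mul]
    have := norm_zeta_two_ge t
    nlinarith
  -- the disc of radius `3/2` about `2 + it` fills the half-plane `Re s > 1/2` at height `t`
  have key := norm_logDeriv_le (g := riemannZeta₁) (c := c) (s := s) (R := 3 / 2) (η := ε / 2)
    (M := M) (by positivity) hMpos differentiable_riemannZeta₁.differentiableOn
    (fun z hz => zeta1_ne_zero hRH (hball z hz).1) (fun z hz => by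
      obtain ⟨hz1, hz2⟩ := hball z hz
      rw [hM, Real.exp_log (by positivity)]
      have hzn : ‖z‖ ≤ 4 + |t| := by
        have := norm_add_le (z - c) c
        rw [sub_add_cancel] at this
        linarith
      have hzn1 : ‖z - 1‖ ≤ 5 + |t| := by
        have := norm_sub_le z 1
        rw [norm_one] at this
        linarith
      calc ‖riemannZeta₁ z‖ ≤ ‖z‖ + 2 * ‖z‖ * ‖z - 1‖ := norm_zeta1_le hz1
        _ ≤ (4 + |t|) + 2 * (4 + |t|) * (5 + |t|) := by gcongr
        _ ≤ 200 * (1 + |t|) ^ 2 * (1 / 4) := by nlinarith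
        _ ≤ _ := by gcongr) (by
      have : s - c = ((s.re - 2 : ℝ) : ℂ) := by
        apply Complex.ext <;> simp [hc, ht]
      rw [this, Complex.norm_real, Real.norm_eq_abs, abs_of_nonpos (by linarith)]
      linarith)
  refine key.trans ?_
  have hMle : M ≤ (Real.log 200 + 2 / δ) * (1 + |t|) ^ δ := by
    rw [hM, Real.log_mul (by norm_num) (by positivity), Real.log_pow]
    have h5 := Real.log_le_rpow_div (by linarith : 0 ≤ 1 + |t|) hδ
    have h6 : 1 ≤ (1 + |t|) ^ δ := Real.one_le_rpow (by linarith) hδ.le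
    have h7 : 0 < Real.log 200 := Real.log_pos (by norm_num)
    push_cast
    calc Real.log 200 + 2 * Real.log (1 + |t|) ≤ Real.log 200 * (1 + |t|) ^ δ +
        2 * ((1 + |t|) ^ δ / δ) := by
          gcongr
          nlinarith
      _ = _ := by ring
  calc 2 * M * (3 / 2) / (ε / 2) ^ 2
      ≤ 2 * ((Real.log 200 + 2 / δ) * (1 + |t|) ^ δ) * (3 / 2) / (ε / 2) ^ 2 := by gcongr
    _ = _ := by ring

/-! ### Vertical integrals and Perron kernels -/

lemma integrable_one_add_abs {r : ℝ} (hr : 1 < r) :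
    Integrable fun y : ℝ => (1 + |y|) ^ (-r) := by
  have := integrable_one_add_norm (E := ℝ) (μ := volume) (r := r) (by simpa using hr)
  simpa [Real.norm_eq_abs] using this

/-- Moving a vertical line of integration across a strip on which the integrand decays. -/
lemma integral_vertical_shift {f : ℂ → ℂ} {a b C r : ℝ} (hab : a ≤ b) (hr : 1 < r)
    (hf : DifferentiableOn ℂ f {s | a ≤ s.re ∧ s.re ≤ b})
    (hb : ∀ s : ℂ, a ≤ s.re → s.re ≤ b → ‖f s‖ ≤ C * (1 + |s.im|) ^ (-r)) :
    ∫ y : ℝ, f (a + y * I) = ∫ y : ℝ, f (b + y * I) := by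
  have h_int : ∀ σ : ℝ, a ≤ σ → σ ≤ b → Integrable fun y : ℝ => f (σ + y * I) := by
    intro σ h1 h2
    refine Integrable.mono' ((integrable_one_add_abs hr).const_mul C) ?_ ?_
    · refine Continuous.aestronglyMeasurable ?_
      refine hf.continuousOn.comp_continuous (by fun_prop) fun y => ?_
      simp [h1, h2]
    · refine Eventually.of_forall fun y => ?_
      have := hb (σ + y * I) (by simpa using h1) (by simpa using h2)
      simpa using this
  have hlim : ∀ σ : ℝ, a ≤ σ → σ ≤ b → Tendsto (fun T : ℝ => ∫ y in (-T)..T, f (σ + y * I)) atTop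
      (nhds (∫ y : ℝ, f (σ + y * I))) := fun σ h1 h2 =>
    intervalIntegral_tendsto_integral (h_int σ h1 h2) tendsto_neg_atTop_atBot tendsto_id
  have hdecay : Tendsto (fun T : ℝ => C * (1 + |T|) ^ (-r) * |b - a|) atTop (nhds 0) := by
    have h1 : Tendsto (fun T : ℝ => (1 + |T|) ^ (-r)) atTop (nhds 0) :=
      (tendsto_rpow_neg_atTop (by linarith : 0 < r)).comp
        (tendsto_const_nhds.add_atTop tendsto_abs_atTop_atTop)
    simpa using (h1.const_mul C).mul_const |b - a|
  have hhor : ∀ u : ℝ → ℝ, (∀ T, |u T| = |T|) →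
      Tendsto (fun T : ℝ => ∫ x in a..b, f (x + (u T) * I)) atTop (nhds 0) := by
    intro u hu
    refine squeeze_zero_norm (fun T => ?_) hdecay
    refine intervalIntegral.norm_integral_le_of_norm_le_const fun x hx => ?_
    rw [uIoc_of_le hab] at hx
    have := hb (x + (u T) * I) (by simpa using hx.1.le) (by simpa using hx.2)
    simpa [hu] using this
  have hrect : ∀ T : ℝ, (∫ y in (-T)..T, f (b + y * I)) - (∫ y in (-T)..T, f (a + y * I)) =
      I * ((∫ x in a..b, f (x + ((-T : ℝ) : ℂ) * I)) - ∫ x in a..b, f (x + (T : ℂ) * I)) := by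
    intro T
    have h := Complex.integral_boundary_rect_eq_zero_of_differentiableOn f
      ((a : ℂ) + ((-T : ℝ) : ℂ) * I) ((b : ℂ) + (T : ℂ) * I) (hf.mono (by
        intro z hz
        have := hz.1
        simp [uIcc_of_le hab] at this
        exact this))
    simp only [add_re, ofReal_re, mul_re, I_re, mul_zero, ofReal_im, I_im, mul_one, sub_self,
      add_zero, add_im, mul_im, zero_add, smul_eq_mul] at h
    linear_combination (-I) * h + ((∫ y in (-T)..T, f (b + y * I)) -
      ∫ y in (-T)..T, f (a + y * I)) * I_mul_I
  have h1 := (hlim b hab le_rfl).sub (hlim a le_rfl hab)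
  have h2 : Tendsto (fun T : ℝ => I * ((∫ x in a..b, f (x + ((-T : ℝ) : ℂ) * I)) -
      ∫ x in a..b, f (x + (T : ℂ) * I))) atTop (nhds (I * (0 - 0))) :=
    ((hhor (fun T => -T) (fun T => abs_neg T)).sub (hhor id fun T => rfl)).const_mul I
  simp_rw [← hrect] at h2
  have := tendsto_nhds_unique h1 h2
  simp only [sub_zero, mul_zero] at this
  exact (sub_eq_zero.1 this).symm

lemma one_add_abs_le_norm {s : ℂ} (hs : 1 / 2 ≤ s.re) : 1 + |s.im| ≤ 3 * ‖s‖ := by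
  have h1 := Complex.abs_re_le_norm s
  have h2 := Complex.abs_im_le_norm s
  have h3 := le_abs_self s.re
  linarith

lemma norm_inv_mul_le {s : ℂ} (hs : 1 / 2 ≤ s.re) :
    ‖1 / (s * (s + 1))‖ ≤ 9 * (1 + |s.im|) ^ (-2 : ℝ) := by
  have h1 := one_add_abs_le_norm hs
  have h2 := one_add_abs_le_norm (s := s + 1) (by simp; linarith)
  have h3 : (s + 1).im = s.im := by simp
  rw [h3] at h2
  have h0 : 0 < 1 + |s.im| := by positivity
  rw [norm_div, norm_one, norm_mul, Real.rpow_neg h0.le]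
  norm_cast
  rw [← div_eq_mul_inv, div_le_div_iff₀ (by nlinarith) (by positivity)]
  nlinarith [mul_le_mul h1 h2 h0.le (by positivity)]

/-- The Perron kernel `1 / (s (s + 1))` inverts to `max (1 - y) 0`. -/
lemma perron_one {y : ℝ} (hy : 0 < y) :
    (1 / (2 * Real.pi) : ℝ) • ∫ v : ℝ, (y : ℂ) ^ (-((2 : ℝ) + v * I : ℂ)) *
      (1 / (((2 : ℝ) + v * I) * ((2 : ℝ) + v * I + 1))) = ((max (1 - y) 0 : ℝ) : ℂ) := by
  set f : ℝ → ℂ := fun t => ((max (1 - t) 0 : ℝ) : ℂ) with hf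
  have hM : ∀ s : ℂ, 0 < s.re → HasMellin f s (1 / (s * (s + 1))) := by
    intro s hs
    have hs0 : s ≠ 0 := by rintro rfl; simp at hs
    have hs1 : s + 1 ≠ 0 := by
      intro h; have := congrArg Complex.re h; simp at this; linarith
    have h := (hasMellin_one_Ioc hs)
    have h' := (hasMellin_cpow_Ioc 1 (s := s) (by simp; linarith))
    have h2 := hasMellin_sub h.1 h'.1
    rw [h.2, h'.2] at h2
    have hcong : ∀ t ∈ Ioi (0 : ℝ), (t : ℂ) ^ (s - 1) • (indicator (Ioc 0 1) (fun _ => (1 : ℂ)) t -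
        indicator (Ioc 0 1) (fun t : ℝ => (t : ℂ) ^ (1 : ℂ)) t) = (t : ℂ) ^ (s - 1) • f t := by
      intro t ht
      by_cases h : t ∈ Ioc (0 : ℝ) 1
      · rw [indicator_of_mem h, indicator_of_mem h, hf, Complex.cpow_one]
        simp only [max_eq_left (sub_nonneg.2 h.2)]
        push_cast; rfl
      · have : 1 < t := by
          by_contra h3; exact h ⟨ht, not_lt.1 h3⟩
        rw [indicator_of_notMem h, indicator_of_notMem h, hf]
        simp only [max_eq_right (sub_nonpos.2 this.le)]
        simp
    refine ⟨(integrableOn_congr_fun hcong measurableSet_Ioi).1 h2.1, ?_⟩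
    rw [mellin, ← setIntegral_congr_fun measurableSet_Ioi hcong]
    refine h2.2.trans ?_
    field_simp
    ring
  have hre : ∀ v : ℝ, 0 < ((2 : ℝ) + v * I : ℂ).re := by intro v; simp
  have hinv := mellinInv_mellin_eq 2 f hy (hM _ (by simp)).1 (by
      have : (fun v : ℝ => mellin f ((2 : ℝ) + v * I)) = fun v : ℝ =>
          1 / (((2 : ℝ) + v * I) * ((2 : ℝ) + v * I + 1) : ℂ) := by
        funext v; exact (hM _ (hre v)).2
      rw [VerticalIntegrable, this]
      refine Integrable.mono' ((integrable_one_add_abs (r := 2) (by norm_num)).const_mul 9) ?_ ?_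
      · exact Measurable.aestronglyMeasurable (by fun_prop)
      · refine Eventually.of_forall fun v => ?_
        have := norm_inv_mul_le (s := (2 : ℝ) + v * I) (by simp; norm_num)
        simpa using this) (by rw [hf]; fun_prop)
  rw [← show f y = ((max (1 - y) 0 : ℝ) : ℂ) from rfl, ← hinv, mellinInv]
  congr 1
  refine integral_congr_ae (Eventually.of_forall fun v => ?_)
  simp only [smul_eq_mul]
  rw [(hM _ (hre v)).2]

/-- The inverse Mellin transform matching the pole of `-ζ'/ζ` at `s = 1`. -/
lemma perron_pole {y : ℝ} (hy : 0 < y) (hy1 : y ≤ 1) :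
    (1 / (2 * Real.pi) : ℝ) • ∫ v : ℝ, (y : ℂ) ^ (-((2 : ℝ) + v * I : ℂ)) *
      (1 / ((((2 : ℝ) + v * I) * ((2 : ℝ) + v * I + 1)) * ((2 : ℝ) + v * I - 1))) =
      (((1 - y) ^ 2 / (2 * y) : ℝ) : ℂ) := by
  set f : ℝ → ℂ := fun t => (((max (1 - t) 0) ^ 2 / (2 * t) : ℝ) : ℂ) with hf
  have hM : ∀ s : ℂ, 1 < s.re → HasMellin f s (1 / (s * (s + 1) * (s - 1))) := by
    intro s hs
    have hs0 : s ≠ 0 := by rintro rfl; simp at hs; linarith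
    have hs1 : s + 1 ≠ 0 := by
      intro h; have := congrArg Complex.re h; simp at this; linarith
    have hs2 : s - 1 ≠ 0 := by
      intro h; have := congrArg Complex.re h; simp at this; linarith
    have h := (hasMellin_one_Ioc (s := s) (by linarith))
    have h' := (hasMellin_cpow_Ioc 1 (s := s) (by simp; linarith))
    have h'' := (hasMellin_cpow_Ioc (-1) (s := s) (by simp; linarith))
    have ha := hasMellin_add h'.1 h''.1
    have hb := hasMellin_const_smul ha.1 (1 / 2 : ℂ)
    have h2 := hasMellin_sub hb.1 h.1
    rw [hb.2, ha.2, h.2, h'.2, h''.2] at h2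
    have hcong : ∀ t ∈ Ioi (0 : ℝ), (t : ℂ) ^ (s - 1) • ((1 / 2 : ℂ) • (
        indicator (Ioc 0 1) (fun t : ℝ => (t : ℂ) ^ (1 : ℂ)) t +
        indicator (Ioc 0 1) (fun t : ℝ => (t : ℂ) ^ (-1 : ℂ)) t) -
        indicator (Ioc 0 1) (fun _ => (1 : ℂ)) t) = (t : ℂ) ^ (s - 1) • f t := by
      intro t ht
      have ht0 : (t : ℂ) ≠ 0 := by exact_mod_cast (ne_of_gt ht)
      by_cases h : t ∈ Ioc (0 : ℝ) 1
      · rw [indicator_of_mem h, indicator_of_mem h, indicator_of_mem h, hf, Complex.cpow_one,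
          Complex.cpow_neg_one]
        simp only [max_eq_left (sub_nonneg.2 h.2)]
        push_cast
        simp only [smul_eq_mul]
        field_simp
        ring
      · have : 1 < t := by
          by_contra h3; exact h ⟨ht, not_lt.1 h3⟩
        rw [indicator_of_notMem h, indicator_of_notMem h, indicator_of_notMem h, hf]
        simp only [max_eq_right (sub_nonpos.2 this.le)]
        simp
    refine ⟨(integrableOn_congr_fun hcong measurableSet_Ioi).1 h2.1, ?_⟩
    rw [mellin, ← setIntegral_congr_fun measurableSet_Ioi hcong]
    refine h2.2.trans ?_
    have hs2' : s + -1 ≠ 0 := by rwa [← sub_eq_add_neg]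
    rw [smul_eq_mul]
    field_simp
    ring
  have hre : ∀ v : ℝ, 1 < ((2 : ℝ) + v * I : ℂ).re := by intro v; simp
  have hinv := mellinInv_mellin_eq 2 f hy (hM _ (by simp)).1 (by
      have : (fun v : ℝ => mellin f ((2 : ℝ) + v * I)) = fun v : ℝ =>
          1 / (((2 : ℝ) + v * I) * ((2 : ℝ) + v * I + 1) * ((2 : ℝ) + v * I - 1) : ℂ) := by
        funext v; exact (hM _ (hre v)).2
      rw [VerticalIntegrable, this]
      refine Integrable.mono' ((integrable_one_add_abs (r := 2) (by norm_num)).const_mul 9) ?_ ?_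
      · exact Measurable.aestronglyMeasurable (by fun_prop)
      · refine Eventually.of_forall fun v => ?_
        have h1 := norm_inv_mul_le (s := (2 : ℝ) + v * I) (by simp; norm_num)
        have h2 : 1 ≤ ‖((2 : ℝ) + v * I - 1 : ℂ)‖ := by
          refine le_trans ?_ (Complex.abs_re_le_norm _)
          simp; norm_num
        rw [← div_div, norm_div]
        refine (div_le_self (norm_nonneg _) h2).trans ?_
        simpa using h1) (by
      rw [hf]
      refine Complex.continuous_ofReal.continuousAt.comp ?_
      exact ContinuousAt.div (by fun_prop) (by fun_prop) (by positivity))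
  have hfy : f y = (((1 - y) ^ 2 / (2 * y) : ℝ) : ℂ) := by
    simp only [hf, max_eq_left (sub_nonneg.2 hy1)]
  rw [← hfy, ← hinv, mellinInv]
  congr 1
  refine integral_congr_ae (Eventually.of_forall fun v => ?_)
  simp only [smul_eq_mul]
  rw [(hM _ (hre v)).2]

/-! ### The Perron formula for `∑ Λ(n) (x - n)₊` -/

/-- The Perron integrand without the power of `x`: `-(ζ₁'/ζ₁)(s) / (s (s + 1))`, holomorphic in
`Re s > 1/2` on RH. -/
noncomputable def perronKernel (s : ℂ) : ℂ :=
  -(deriv riemannZeta₁ s / riemannZeta₁ s) * (1 / (s * (s + 1)))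

lemma differentiableOn_perronKernel (hRH : RiemannHypothesis) :
    DifferentiableOn ℂ perronKernel {s | 1 / 2 < s.re} := by
  intro s hs
  have hs' : 1 / 2 < s.re := hs
  have hs0 : s ≠ 0 := by rintro rfl; simp at hs'; linarith
  have hs1 : s + 1 ≠ 0 := by
    intro h; have := congrArg Complex.re h; simp at this; linarith
  have h1 : DifferentiableAt ℂ (deriv riemannZeta₁) s := differentiable_riemannZeta₁.deriv s
  have h2 : DifferentiableAt ℂ riemannZeta₁ s := differentiable_riemannZeta₁ s
  have h3 : DifferentiableAt ℂ (fun s : ℂ => 1 / (s * (s + 1))) s :=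
    (differentiableAt_const _).div (by fun_prop) (mul_ne_zero hs0 hs1)
  exact (((h1.div h2 (zeta1_ne_zero hRH hs')).neg).mul h3).differentiableWithinAt

lemma norm_perronKernel_le (hRH : RiemannHypothesis) {ε δ : ℝ} (hε : 0 < ε) (hδ : 0 < δ) :
    ∃ C : ℝ, 0 < C ∧ ∀ s : ℂ, 1 / 2 + ε ≤ s.re → s.re ≤ 2 →
      ‖perronKernel s‖ ≤ C * (1 + |s.im|) ^ (-(2 - δ)) := by
  obtain ⟨C, hC, h⟩ := norm_logDeriv_zeta1_le hRH hε hδ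
  refine ⟨C * 9, by positivity, fun s h1 h2 => ?_⟩
  rw [perronKernel, norm_mul, norm_neg]
  have h0 : 0 < 1 + |s.im| := by positivity
  calc _ ≤ (C * (1 + |s.im|) ^ δ) * (9 * (1 + |s.im|) ^ (-2 : ℝ)) :=
        mul_le_mul (h s h1 h2) (norm_inv_mul_le (by linarith)) (norm_nonneg _) (by positivity)
    _ = C * 9 * ((1 + |s.im|) ^ δ * (1 + |s.im|) ^ (-2 : ℝ)) := by ring
    _ = _ := by rw [← Real.rpow_add h0]; ring_nf

lemma integrable_cpow_mul_perronKernel (hRH : RiemannHypothesis) {x σ : ℝ} (hx : 0 < x)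
    (hσ : 1 / 2 < σ) (hσ2 : σ ≤ 2) (a : ℂ) :
    Integrable fun v : ℝ => (x : ℂ) ^ (((σ : ℂ) + v * I) + a) * perronKernel (σ + v * I) := by
  obtain ⟨C, hC, h⟩ := norm_perronKernel_le hRH (ε := σ - 1 / 2) (δ := 1 / 2) (by linarith)
    (by norm_num)
  refine Integrable.mono' (((integrable_one_add_abs (r := 2 - 1 / 2) (by norm_num)).const_mul
    C).const_mul (x ^ (σ + a.re))) ?_ ?_
  · refine Continuous.aestronglyMeasurable ?_
    refine Continuous.mul ?_ ?_
    · have : (x : ℂ) ≠ 0 := by exact_mod_cast hx.ne'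
      exact Continuous.const_cpow (by fun_prop) (Or.inl this)
    · refine (differentiableOn_perronKernel hRH).continuousOn.comp_continuous (by fun_prop)
        fun y => ?_
      simpa using hσ
  · refine Eventually.of_forall fun v => ?_
    rw [norm_mul, Complex.norm_cpow_eq_rpow_re_of_pos hx]
    have h1 := h (σ + v * I) (by simp) (by simpa using hσ2)
    have h2 : ((σ : ℂ) + v * I + a).re = σ + a.re := by simp
    rw [h2]
    gcongr
    simpa using h1

open ArithmeticFunction in
lemma LSeries_vonMangoldt_eq_zeta1 {s : ℂ} (hs : 1 < s.re) :
    LSeries (fun n => (vonMangoldt n : ℂ)) s =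
      1 / (s - 1) - deriv riemannZeta₁ s / riemannZeta₁ s := by
  have hne : s ≠ 1 := by rintro rfl; simp at hs
  have hs1 := sub_ne_zero.2 hne
  have hz : riemannZeta₁ s ≠ 0 := by
    rw [zeta1_eq_mul hne]
    exact mul_ne_zero hs1 (riemannZeta_ne_zero_of_one_le_re hs.le)
  rw [LSeries_vonMangoldt_eq_deriv_riemannZeta_div hs,
    deriv_riemannZeta_eq_neg_inv_sub_sq_mul_add hne, riemannZeta_eq_inv_sub_mul hne]
  field_simp
  ring

open ArithmeticFunction in
/-- The smoothed Perron formula for `∑ Λ(n) (x - n)₊`, with the contribution of the pole at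
`s = 1` evaluated as `(x - 1)² / 2`. -/
lemma hasSum_vonMangoldt_perron (hRH : RiemannHypothesis) {x : ℝ} (hx : 1 ≤ x) :
    HasSum (fun n : ℕ => ((vonMangoldt n * max (x - n) 0 : ℝ) : ℂ))
      ((1 / (2 * Real.pi) : ℝ) • (∫ v : ℝ, (x : ℂ) ^ (((2 : ℝ) : ℂ) + v * I + 1) *
        perronKernel ((2 : ℝ) + v * I)) + (((x - 1) ^ 2 / 2 : ℝ) : ℂ)) := by
  have hx0 : 0 < x := by linarith
  have hxc : (x : ℂ) ≠ 0 := by exact_mod_cast hx0.ne'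
  set S : ℝ → ℂ := fun v => ((2 : ℝ) : ℂ) + v * I with hS
  have hSre : ∀ v, (S v).re = 2 := by intro v; simp [hS]
  have hSim : ∀ v, (S v).im = v := by intro v; simp [hS]
  have hScont : Continuous S := by fun_prop
  set k : ℝ → ℂ := fun v => (x : ℂ) ^ (S v) * (1 / (S v * (S v + 1))) with hk
  have hkm : Measurable k := by
    have : Measurable S := hScont.measurable
    exact (Continuous.const_cpow hScont (Or.inl hxc)).measurable.mul (by fun_prop)
  have hkn : ∀ v, ‖k v‖ ≤ x ^ 2 * (9 * (1 + |v|) ^ (-2 : ℝ)) := by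
    intro v
    rw [hk, norm_mul, Complex.norm_cpow_eq_rpow_re_of_pos hx0, hSre]
    have := norm_inv_mul_le (s := S v) (by rw [hSre]; norm_num)
    rw [hSim] at this
    have h2 : x ^ (2 : ℝ) = x ^ 2 := by norm_cast
    rw [h2]
    gcongr
  have hki : Integrable k :=
    Integrable.mono' (((integrable_one_add_abs (r := 2) (by norm_num)).const_mul 9).const_mul
      (x ^ 2)) hkm.aestronglyMeasurable (Eventually.of_forall hkn)
  set T : ℕ → ℝ → ℂ := fun n v => LSeries.term (fun n => (vonMangoldt n : ℂ)) (S v) n with hT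
  have hTn : ∀ n v, ‖T n v‖ = ‖LSeries.term (fun n => (vonMangoldt n : ℂ)) 2 n‖ := by
    intro n v
    simp only [hT, LSeries.norm_term_eq, hSre]
    simp
  have hTm : ∀ n, Continuous (T n) := by
    intro n
    rcases Nat.eq_zero_or_pos n with rfl | hn
    · simp only [hT, LSeries.term_zero]; exact continuous_const
    · have hnc : (n : ℂ) ≠ 0 := by exact_mod_cast hn.ne'
      simp only [hT, LSeries.term_of_ne_zero hn.ne']
      refine continuous_const.div (Continuous.const_cpow hScont (Or.inl hnc)) fun v => ?_
      simp [Complex.cpow_eq_zero_iff, hnc]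
  have hsumm : Summable fun n => ‖LSeries.term (fun n => (vonMangoldt n : ℂ)) 2 n‖ :=
    (LSeriesSummable_vonMangoldt (s := 2) (by simp)).norm
  have hFi : ∀ n, Integrable fun v => T n v * k v := by
    intro n
    refine hki.bdd_mul (c := ‖LSeries.term (fun n => (vonMangoldt n : ℂ)) 2 n‖)
      (hTm n).aestronglyMeasurable (Eventually.of_forall fun v => (hTn n v).le)
  have hswap := hasSum_integral_of_summable_integral_norm (F := fun n v => T n v * k v) hFi (by
    have : ∀ n, ∫ v, ‖T n v * k v‖ =
        ‖LSeries.term (fun n => (vonMangoldt n : ℂ)) 2 n‖ * ∫ v, ‖k v‖ := by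
      intro n
      simp_rw [norm_mul, hTn]
      exact integral_const_mul _ _
    simp_rw [this]
    exact hsumm.mul_right _)
  have hterm : ∀ n : ℕ, ((vonMangoldt n * max (x - n) 0 : ℝ) : ℂ) =
      (x : ℂ) * ((1 / (2 * Real.pi) : ℝ) • ∫ v, T n v * k v) := by
    intro n
    rcases Nat.eq_zero_or_pos n with rfl | hn
    · simp [hT]
    have hn0 : (0 : ℝ) < n := by exact_mod_cast hn
    have h1 := perron_one (y := n / x) (by positivity)
    have h2 : ∀ v, T n v * k v = (vonMangoldt n : ℂ) * (((n / x : ℝ) : ℂ) ^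
        (-((2 : ℝ) + v * I : ℂ)) * (1 / (((2 : ℝ) + v * I) * ((2 : ℝ) + v * I + 1)))) := by
      intro v
      simp only [hT, LSeries.term_of_ne_zero hn.ne', hk]
      change _ = (vonMangoldt n : ℂ) * (((n / x : ℝ) : ℂ) ^ (-(S v)) * (1 / (S v * (S v + 1))))
      have h3 : ((n / x : ℝ) : ℂ) ^ (-(S v)) = (x : ℂ) ^ (S v) / (n : ℂ) ^ (S v) := by
        rw [div_eq_mul_inv, Complex.ofReal_mul, Complex.mul_cpow_ofReal_nonneg hn0.le
          (by positivity), Complex.ofReal_inv, Complex.cpow_neg, Complex.cpow_neg,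
          Complex.inv_cpow _ _ (by
            rw [Complex.arg_ofReal_of_nonneg hx0.le]; exact Real.pi_pos.ne), inv_inv]
        push_cast
        ring
      rw [h3]
      ring
    simp_rw [h2]
    rw [integral_const_mul, ← mul_smul_comm, h1]
    have h4 : max (x - n) 0 = x * max (1 - n / x) 0 := by
      rw [mul_max_of_nonneg _ _ hx0.le]
      congr 1
      · field_simp
      · simp
    rw [h4]
    push_cast
    ring
  simp_rw [hterm]
  have hfin := (hswap.const_smul (1 / (2 * Real.pi) : ℝ)).mul_left (x : ℂ)
  refine Eq.subst (motive := HasSum _) ?_ hfin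
  symm
  -- the first summand is the part of `-ζ'/ζ` regular at `s = 1`, the second the pole `1/(s - 1)`
  have hL : ∀ v, ∑' n, T n v * k v = (x : ℂ) ^ (S v + 0) * perronKernel (S v) +
      ((1 / x : ℝ) : ℂ) ^ (-((2 : ℝ) + v * I : ℂ)) *
      (1 / ((((2 : ℝ) + v * I) * ((2 : ℝ) + v * I + 1)) * ((2 : ℝ) + v * I - 1))) := by
    intro v
    rw [tsum_mul_right]
    change LSeries (fun n => (vonMangoldt n : ℂ)) (S v) * k v = _ +
      ((1 / x : ℝ) : ℂ) ^ (-(S v)) * (1 / ((S v * (S v + 1)) * (S v - 1)))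
    rw [LSeries_vonMangoldt_eq_zeta1 (by rw [hSre]; norm_num), perronKernel, hk]
    have h3 : ((1 / x : ℝ) : ℂ) ^ (-(S v)) = (x : ℂ) ^ (S v) := by
      rw [one_div, Complex.ofReal_inv, Complex.cpow_neg, Complex.inv_cpow _ _ (by
            rw [Complex.arg_ofReal_of_nonneg hx0.le]; exact Real.pi_pos.ne), inv_inv]
    rw [h3, add_zero, ← div_div (1 : ℂ) (S v * (S v + 1))]
    ring
  rw [integral_congr_ae (Eventually.of_forall hL)]
  have hi1 := integrable_cpow_mul_perronKernel hRH hx0 (σ := 2) (by norm_num) le_rfl 0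
  have hi2 : Integrable fun v : ℝ => ((1 / x : ℝ) : ℂ) ^ (-((2 : ℝ) + v * I : ℂ)) *
      (1 / ((((2 : ℝ) + v * I) * ((2 : ℝ) + v * I + 1)) * ((2 : ℝ) + v * I - 1))) := by
    have : ∀ v : ℝ, ((1 / x : ℝ) : ℂ) ^ (-((2 : ℝ) + v * I : ℂ)) *
      (1 / ((((2 : ℝ) + v * I) * ((2 : ℝ) + v * I + 1)) * ((2 : ℝ) + v * I - 1))) =
      (1 / (S v - 1)) * k v := by
      intro v
      change ((1 / x : ℝ) : ℂ) ^ (-(S v)) * (1 / ((S v * (S v + 1)) * (S v - 1))) = _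
      have h3 : ((1 / x : ℝ) : ℂ) ^ (-(S v)) = (x : ℂ) ^ (S v) := by
        rw [one_div, Complex.ofReal_inv, Complex.cpow_neg, Complex.inv_cpow _ _ (by
              rw [Complex.arg_ofReal_of_nonneg hx0.le]; exact Real.pi_pos.ne), inv_inv]
      rw [h3, hk, ← div_div (1 : ℂ) (S v * (S v + 1))]
      ring
    simp_rw [this]
    have hSm : Measurable S := hScont.measurable
    refine hki.bdd_mul (c := 1) (by exact Measurable.aestronglyMeasurable (by fun_prop))
      (Eventually.of_forall fun v => ?_)
    have h2 : 1 ≤ ‖S v - 1‖ := by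
      refine le_trans ?_ (Complex.abs_re_le_norm _)
      rw [Complex.sub_re, hSre]; norm_num
    rw [norm_div, norm_one]
    exact (div_le_one (by linarith)).2 h2
  rw [integral_add hi1 hi2, smul_add, perron_pole (by positivity) (by
    rw [div_le_one hx0]; exact hx), mul_add]
  congr 1
  · rw [mul_smul_comm, ← integral_const_mul]
    congr 2
    funext v
    rw [Complex.cpow_add _ _ hxc, add_zero, Complex.cpow_one]
    ring
  · have : (x - 1) ^ 2 / 2 = x * ((1 - 1 / x) ^ 2 / (2 * (1 / x))) := by
      field_simp
    rw [this]
    push_cast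
    ring

/-! ### The prime number theorem with the RH error term -/

/-- Interpolation between the mean value bound `‖s + 1‖ (x + 1) ^ σ` and the trivial bound
`2 (x + 1) ^ (σ + 1)`. -/
lemma norm_cpow_sub_le {x : ℝ} (hx : 1 ≤ x) {s : ℂ} (hs : 0 ≤ s.re) {δ : ℝ} (hδ : 0 ≤ δ)
    (hδ1 : δ ≤ 1) :
    ‖((x + 1 : ℝ) : ℂ) ^ (s + 1) - (x : ℂ) ^ (s + 1)‖ ≤
      2 * ‖s + 1‖ ^ (1 - δ) * (x + 1) ^ (s.re + δ) := by
  have hx0 : 0 < x := by linarith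
  have hs1 : s + 1 ≠ 0 := by
    intro h; have := congrArg Complex.re h; simp at this; linarith
  set N := ‖((x + 1 : ℝ) : ℂ) ^ (s + 1) - (x : ℂ) ^ (s + 1)‖ with hN
  have hA : N ≤ ‖s + 1‖ * (x + 1) ^ s.re := by
    have hd : ∀ t ∈ Icc x (x + 1), HasDerivWithinAt (fun t : ℝ => (t : ℂ) ^ (s + 1))
        ((s + 1) * (t : ℂ) ^ s) (Icc x (x + 1)) t := by
      intro t ht
      have ht0 : t ≠ 0 := by have := ht.1; linarith
      have := (hasDerivAt_ofReal_cpow_const' (r := s) ht0 (by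
        intro h; apply hs1; rw [h]; ring)).const_mul (s + 1)
      refine HasDerivAt.hasDerivWithinAt ?_
      refine this.congr_of_eventuallyEq (Eventually.of_forall fun u => ?_)
      exact (mul_div_cancel₀ _ hs1).symm
    have := norm_image_sub_le_of_norm_deriv_le_segment' (C := ‖s + 1‖ * (x + 1) ^ s.re) hd (by
      intro t ht
      have ht0 : 0 < t := by have := ht.1; linarith
      rw [norm_mul, Complex.norm_cpow_eq_rpow_re_of_pos ht0]
      have := ht.2.le
      gcongr) (x + 1) (right_mem_Icc.2 (by linarith))
    simpa [hN] using this
  have hB : N ≤ 2 * (x + 1) ^ (s.re + 1) := by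
    refine (norm_sub_le _ _).trans ?_
    rw [Complex.norm_cpow_eq_rpow_re_of_pos hx0,
      Complex.norm_cpow_eq_rpow_re_of_pos (by linarith)]
    have : x ^ (s + 1).re ≤ (x + 1) ^ (s + 1).re :=
      Real.rpow_le_rpow hx0.le (by linarith) (by simp; linarith)
    simp only [Complex.add_re, Complex.one_re] at *
    linarith
  have hN0 : 0 ≤ N := norm_nonneg _
  have hx1 : 0 < x + 1 := by linarith
  calc N = N ^ (1 - δ) * N ^ δ := by
        rw [← Real.rpow_add_of_nonneg hN0 (by linarith) hδ]; simp
    _ ≤ (‖s + 1‖ * (x + 1) ^ s.re) ^ (1 - δ) * (2 * (x + 1) ^ (s.re + 1)) ^ δ := by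
        have : 0 ≤ 1 - δ := by linarith
        gcongr
    _ = 2 ^ δ * ‖s + 1‖ ^ (1 - δ) * (x + 1) ^ (s.re + δ) := by
        rw [Real.mul_rpow (by positivity) (by positivity), Real.mul_rpow (by positivity)
          (by positivity), ← Real.rpow_mul hx1.le, ← Real.rpow_mul hx1.le]
        have : s.re + δ = s.re * (1 - δ) + (s.re + 1) * δ := by ring
        rw [this, Real.rpow_add hx1]
        ring
    _ ≤ _ := by
        gcongr
        calc (2 : ℝ) ^ δ ≤ 2 ^ (1 : ℝ) := Real.rpow_le_rpow_of_exponent_le (by norm_num) hδ1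
          _ = 2 := by norm_num

lemma perron_shift (hRH : RiemannHypothesis) {x σ : ℝ} (hx : 1 ≤ x) (hσ : 1 / 2 < σ)
    (hσ2 : σ ≤ 2) :
    ∫ v : ℝ, (x : ℂ) ^ (((2 : ℝ) : ℂ) + v * I + 1) * perronKernel ((2 : ℝ) + v * I) =
      ∫ v : ℝ, (x : ℂ) ^ ((σ : ℂ) + v * I + 1) * perronKernel (σ + v * I) := by
  have hx0 : 0 < x := by linarith
  have hxc : (x : ℂ) ≠ 0 := by exact_mod_cast hx0.ne'
  obtain ⟨C, hC, h⟩ := norm_perronKernel_le hRH (ε := σ - 1 / 2) (δ := 1 / 2) (by linarith)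
    (by norm_num)
  refine (integral_vertical_shift (f := fun s => (x : ℂ) ^ (s + 1) * perronKernel s)
    (C := x ^ (3 : ℝ) * C) (r := 2 - 1 / 2) hσ2 (by norm_num) ?_ ?_).symm
  · refine DifferentiableOn.mul ?_ ((differentiableOn_perronKernel hRH).mono
      fun s hs => lt_of_lt_of_le hσ hs.1)
    refine Differentiable.differentiableOn ?_
    exact Differentiable.const_cpow (by fun_prop) (Or.inl hxc)
  · intro s h1 h2
    rw [norm_mul, Complex.norm_cpow_eq_rpow_re_of_pos hx0, mul_assoc]
    refine mul_le_mul (Real.rpow_le_rpow_of_exponent_le hx ?_) (h s (by linarith) h2)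
      (norm_nonneg _) (by positivity)
    simp; linarith

/-- Differencing gains a factor `x` over each integral: on the line `Re s = 1/2 + ε/2` the
difference of the two integrands is integrable with total mass `O(x ^ (1/2 + ε))`. -/
lemma norm_perron_difference_le (hRH : RiemannHypothesis) {ε : ℝ} (hε : 0 < ε) (hε1 : ε ≤ 1) :
    ∃ C : ℝ, 0 < C ∧ ∀ x : ℝ, 1 ≤ x →
      ‖(∫ v : ℝ, ((x + 1 : ℝ) : ℂ) ^ (((2 : ℝ) : ℂ) + v * I + 1) *
          perronKernel ((2 : ℝ) + v * I)) -
        ∫ v : ℝ, (x : ℂ) ^ (((2 : ℝ) : ℂ) + v * I + 1) * perronKernel ((2 : ℝ) + v * I)‖ ≤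
      C * x ^ (1 / 2 + ε) := by
  -- the line of integration is `Re s = 1/2 + δ`, and `δ` is also the interpolation exponent
  set δ := ε / 2 with hδ
  have hδ0 : 0 < δ := by positivity
  obtain ⟨C, hC, h⟩ := norm_perronKernel_le hRH hδ0 (half_pos hδ0)
  set K := ∫ v : ℝ, (1 + |v|) ^ (-(1 + δ / 2)) with hK
  have hKi := integrable_one_add_abs (r := 1 + δ / 2) (by linarith)
  have hK0 : 0 ≤ K := integral_nonneg fun v => by positivity
  refine ⟨48 * C * (K + 1), by positivity, fun x hx => ?_⟩
  have hσ : 1 / 2 < 1 / 2 + δ := by linarith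
  have hσ2 : 1 / 2 + δ ≤ 2 := by linarith
  have hx1 : 0 < x + 1 := by linarith
  rw [perron_shift hRH hx hσ hσ2, perron_shift hRH (x := x + 1) (by linarith) hσ hσ2,
    ← integral_sub (integrable_cpow_mul_perronKernel hRH (by linarith) hσ hσ2 1)
      (integrable_cpow_mul_perronKernel hRH (by linarith) hσ hσ2 1)]
  have hpt : ∀ v : ℝ, ‖((x + 1 : ℝ) : ℂ) ^ (((1 / 2 + δ : ℝ) : ℂ) + v * I + 1) *
        perronKernel ((1 / 2 + δ : ℝ) + v * I) - (x : ℂ) ^ (((1 / 2 + δ : ℝ) : ℂ) + v * I + 1) *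
        perronKernel ((1 / 2 + δ : ℝ) + v * I)‖ ≤
      (6 * C * (x + 1) ^ (1 / 2 + ε)) * (1 + |v|) ^ (-(1 + δ / 2)) := by
    intro v
    set s : ℂ := ((1 / 2 + δ : ℝ) : ℂ) + v * I with hs
    have hre : s.re = 1 / 2 + δ := by simp [hs]
    have him : s.im = v := by simp [hs]
    have h1 := norm_cpow_sub_le hx (s := s) (by rw [hre]; linarith) hδ0.le (by linarith)
    have h2 := h s hre.ge (by rw [hre]; exact hσ2)
    rw [him] at h2
    have h3 : ‖s + 1‖ ≤ 3 * (1 + |v|) := by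
      refine (Complex.norm_le_abs_re_add_abs_im _).trans ?_
      simp only [Complex.add_re, Complex.add_im, Complex.one_re, Complex.one_im, hre, him, add_zero]
      rw [abs_of_pos (by linarith)]
      have := abs_nonneg v
      linarith
    have hv : 0 < 1 + |v| := by positivity
    have h4 : ‖s + 1‖ ^ (1 - δ) ≤ 3 * (1 + |v|) ^ (1 - δ) := by
      have h01 : 0 ≤ 1 - δ := by linarith
      calc _ ≤ (3 * (1 + |v|)) ^ (1 - δ) := by gcongr
        _ = 3 ^ (1 - δ) * (1 + |v|) ^ (1 - δ) := Real.mul_rpow (by norm_num) hv.le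
        _ ≤ 3 ^ (1 : ℝ) * (1 + |v|) ^ (1 - δ) := by
            gcongr
            · norm_num
            · linarith
        _ = _ := by norm_num
    rw [← sub_mul, norm_mul]
    have h5 : s.re + δ = 1 / 2 + ε := by rw [hre, hδ]; ring
    rw [h5] at h1
    calc _ ≤ (2 * (3 * (1 + |v|) ^ (1 - δ)) * (x + 1) ^ (1 / 2 + ε)) *
          (C * (1 + |v|) ^ (-(2 - δ / 2))) := by
          refine mul_le_mul (h1.trans ?_) h2 (norm_nonneg _) (by positivity)
          gcongr
      _ = (6 * C * (x + 1) ^ (1 / 2 + ε)) * ((1 + |v|) ^ (1 - δ) *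
          (1 + |v|) ^ (-(2 - δ / 2))) := by ring
      _ = _ := by rw [← Real.rpow_add hv]; ring_nf
  refine (norm_integral_le_of_norm_le (hKi.const_mul _) (Eventually.of_forall hpt)).trans ?_
  rw [integral_const_mul, ← hK]
  have h6 : (x + 1) ^ (1 / 2 + ε) ≤ 8 * x ^ (1 / 2 + ε) := by
    calc (x + 1) ^ (1 / 2 + ε) ≤ (2 * x) ^ (1 / 2 + ε) := by gcongr; linarith
      _ = 2 ^ (1 / 2 + ε) * x ^ (1 / 2 + ε) := Real.mul_rpow (by norm_num) (by linarith)
      _ ≤ 2 ^ (3 : ℝ) * x ^ (1 / 2 + ε) := by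
          gcongr
          · norm_num
          · linarith
      _ = _ := by norm_num
  calc _ ≤ 6 * C * (8 * x ^ (1 / 2 + ε)) * (K + 1) := by gcongr; linarith
    _ = _ := by ring

open ArithmeticFunction in
/-- On RH, `ψ(x) = x + O(x ^ (1/2 + ε))`: the smoothed sum
`W = ∑ Λ(n) ((x + 1 - n)₊ - (x - n)₊)` lies between `ψ(x)` and `ψ(x + 1)`. -/
lemma abs_psi_sub_le (hRH : RiemannHypothesis) {ε : ℝ} (hε : 0 < ε) (hε1 : ε ≤ 1) :
    ∃ C : ℝ, 0 < C ∧ ∀ x : ℝ, 1 ≤ x → |Chebyshev.psi x - x| ≤ C * x ^ (1 / 2 + ε) := by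
  obtain ⟨C, hC, h⟩ := norm_perron_difference_le hRH hε hε1
  have hW : ∀ x : ℝ, 1 ≤ x → ∃ W : ℝ, Chebyshev.psi x ≤ W ∧ W ≤ Chebyshev.psi (x + 1) ∧
      |W - (x - 1 / 2)| ≤ C * x ^ (1 / 2 + ε) := by
    intro x hx
    have hs := (hasSum_vonMangoldt_perron hRH (x := x + 1) (by linarith)).sub
      (hasSum_vonMangoldt_perron hRH hx)
    set J₁ := ∫ v : ℝ, ((x + 1 : ℝ) : ℂ) ^ (((2 : ℝ) : ℂ) + v * I + 1) *
          perronKernel ((2 : ℝ) + v * I) with hJ₁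
    set J₂ := ∫ v : ℝ, (x : ℂ) ^ (((2 : ℝ) : ℂ) + v * I + 1) *
          perronKernel ((2 : ℝ) + v * I) with hJ₂
    have hJ : ‖J₁ - J₂‖ ≤ C * x ^ (1 / 2 + ε) := h x hx
    have hs' := Complex.hasSum_re hs
    have hterm : ∀ n : ℕ, (((vonMangoldt n * max (x + 1 - n) 0 : ℝ) : ℂ) -
        ((vonMangoldt n * max (x - n) 0 : ℝ) : ℂ)).re =
        vonMangoldt n * (max (x + 1 - n) 0 - max (x - n) 0) := by
      intro n
      rw [Complex.sub_re, Complex.ofReal_re, Complex.ofReal_re]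
      ring
    simp only [hterm] at hs'
    refine ⟨(((1 / (2 * Real.pi) : ℝ) • J₁ + (((x + 1 - 1) ^ 2 / 2 : ℝ) : ℂ)) -
        ((1 / (2 * Real.pi) : ℝ) • J₂ + (((x - 1) ^ 2 / 2 : ℝ) : ℂ))).re, ?_, ?_, ?_⟩
    · rw [Chebyshev.psi_eq_sum_Icc]
      refine le_trans (Finset.sum_le_sum fun n hn => ?_) (sum_le_hasSum (Finset.Icc 0 ⌊x⌋₊)
        (fun n _ => ?_) hs')
      · have hn' : (n : ℝ) ≤ x :=
          (Nat.le_floor_iff (by linarith)).1 (Finset.mem_Icc.1 hn).2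
        rw [max_eq_left (by linarith), max_eq_left (by linarith)]
        apply le_of_eq
        ring
      · refine mul_nonneg vonMangoldt_nonneg (sub_nonneg.2 (max_le_max ?_ le_rfl))
        linarith
    · rw [Chebyshev.psi_eq_sum_Icc]
      have hfin := hasSum_sum_of_ne_finset_zero
        (f := fun n => if n ∈ Finset.Icc 0 ⌊x + 1⌋₊ then vonMangoldt n else 0)
        (s := Finset.Icc 0 ⌊x + 1⌋₊) (L := .unconditional ℕ) fun n hn => if_neg hn
      rw [Finset.sum_congr rfl fun n hn => if_pos hn] at hfin
      refine hasSum_le (fun n => ?_) hs' hfin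
      have hΛ : 0 ≤ vonMangoldt n := vonMangoldt_nonneg
      split_ifs with hn
      · refine mul_le_of_le_one_right hΛ ?_
        have := le_max_left (x - n) 0
        have := le_max_right (x - n) 0
        rw [sub_le_iff_le_add]
        exact max_le (by linarith) (by linarith)
      · have hn' : x + 1 < n := by
          rw [← Nat.floor_lt (by linarith)]
          simpa using hn
        rw [max_eq_right (by linarith), max_eq_right (by linarith)]
        simp
    · have : (((1 / (2 * Real.pi) : ℝ) • J₁ + (((x + 1 - 1) ^ 2 / 2 : ℝ) : ℂ)) -
        ((1 / (2 * Real.pi) : ℝ) • J₂ + (((x - 1) ^ 2 / 2 : ℝ) : ℂ))).re - (x - 1 / 2) =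
        ((1 / (2 * Real.pi) : ℝ) • (J₁ - J₂)).re := by
        rw [smul_sub]
        simp only [Complex.sub_re, Complex.add_re, Complex.ofReal_re]
        ring
      rw [this]
      refine (Complex.abs_re_le_norm _).trans ?_
      rw [norm_smul]
      refine le_trans (mul_le_of_le_one_left (norm_nonneg _) ?_) hJ
      have := Real.pi_gt_three
      rw [Real.norm_of_nonneg (by positivity), div_le_one (by positivity)]
      linarith
  refine ⟨C + 2, by positivity, fun x hx => ?_⟩
  have hp1 : 1 ≤ x ^ (1 / 2 + ε) := Real.one_le_rpow hx (by linarith)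
  rw [abs_le]
  constructor
  · rcases le_or_gt 2 x with h2 | h2
    · obtain ⟨W, -, hW2, hW3⟩ := hW (x - 1) (by linarith)
      rw [sub_add_cancel] at hW2
      have h4 : (x - 1) ^ (1 / 2 + ε) ≤ x ^ (1 / 2 + ε) :=
        Real.rpow_le_rpow (by linarith) (by linarith) (by linarith)
      have h5 := (abs_le.1 hW3).1
      nlinarith
    · have := Chebyshev.psi_nonneg x
      nlinarith
  · obtain ⟨W, hW1, -, hW3⟩ := hW x hx
    have h5 := (abs_le.1 hW3).2
    nlinarith

/-- On RH, `θ(x) = x + O(x ^ (1/2 + ε))`. -/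
lemma abs_theta_sub_le (hRH : RiemannHypothesis) {ε : ℝ} (hε : 0 < ε) (hε1 : ε ≤ 1) :
    ∃ C : ℝ, 0 < C ∧ ∀ x : ℝ, 1 ≤ x → |Chebyshev.theta x - x| ≤ C * x ^ (1 / 2 + ε) := by
  obtain ⟨C, hC, h⟩ := abs_psi_sub_le hRH hε hε1
  obtain ⟨B, hB⟩ := Chebyshev.psi_sub_theta_le_mul_sqrt
  refine ⟨C + |B|, by positivity, fun x hx => ?_⟩
  have h1 := abs_le.1 (h x hx)
  have h2 := hB x
  have h3 := Chebyshev.theta_le_psi x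
  have h4 : B * √x ≤ |B| * x ^ (1 / 2 + ε) := by
    rw [Real.sqrt_eq_rpow]
    refine mul_le_mul (le_abs_self B) (Real.rpow_le_rpow_of_exponent_le hx (by linarith))
      (by positivity) (abs_nonneg B)
  have h5 : 0 ≤ |B| * x ^ (1 / 2 + ε) := by positivity
  rw [abs_le, add_mul]
  constructor <;> linarith [h1.1, h1.2]

/-! ### The greedy choice of cube roots of unity -/

/-- The three cube roots of unity are spread so evenly that one of them makes an angle of at most
`π/3` with any given `v`. -/
lemma exists_cubeRoot_re_ge (v : ℂ) :
    ∃ ω : ℂ, ω ^ 3 = 1 ∧ ‖v‖ / 2 ≤ (v * (starRingEnd ℂ) ω).re := by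
  have h3 : √3 ^ 2 = (3 : ℝ) := Real.sq_sqrt (by norm_num)
  have h30 : 0 ≤ √3 := Real.sqrt_nonneg 3
  have hr : ‖v‖ ^ 2 = v.re ^ 2 + v.im ^ 2 := by
    rw [Complex.sq_norm, Complex.normSq_apply]; ring
  have hr0 := norm_nonneg v
  have hre := Complex.abs_re_le_norm v
  by_cases ha : ‖v‖ / 2 ≤ v.re
  · exact ⟨1, by norm_num, by simpa using ha⟩
  push Not at ha
  have hkey : ‖v‖ + v.re ≤ √3 * |v.im| := by
    refine le_of_sq_le_sq ?_ (by positivity)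
    rw [mul_pow, h3, sq_abs]
    have := (abs_le.1 hre).1
    nlinarith
  have hcube : ∀ e : ℝ, e ^ 2 = 3 → (((-1 / 2 : ℝ) : ℂ) + ((e / 2 : ℝ) : ℂ) * I) ^ 3 = 1 := by
    intro e he
    have hI : I ^ 2 = -1 := Complex.I_sq
    have he' : (e : ℂ) ^ 2 = 3 := by exact_mod_cast he
    push_cast
    linear_combination (-3 / 8 * (e : ℂ) ^ 2 + I * e ^ 3 / 8) * hI + (3 / 8 - I * e / 8) * he'
  have hre' : ∀ e : ℝ, (v * (starRingEnd ℂ) (((-1 / 2 : ℝ) : ℂ) + ((e / 2 : ℝ) : ℂ) * I)).re =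
      -v.re / 2 + e * v.im / 2 := by
    intro e
    rw [map_add, map_mul, Complex.conj_ofReal, Complex.conj_ofReal, Complex.conj_I]
    simp only [Complex.mul_re, Complex.add_re, Complex.add_im, Complex.mul_im, Complex.neg_re,
      Complex.neg_im, Complex.I_re, Complex.I_im, Complex.ofReal_re, Complex.ofReal_im]
    ring
  rcases le_total 0 v.im with h | h
  · refine ⟨_, hcube _ h3, ?_⟩
    rw [abs_of_nonneg h] at hkey
    rw [hre']
    linarith
  · refine ⟨_, hcube (-√3) (by rw [neg_sq, h3]), ?_⟩
    rw [abs_of_nonpos h] at hkey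
    rw [hre']
    linarith

/-- A cube root of unity pointing roughly in the direction of `v`. -/
noncomputable def cubeChoice (v : ℂ) : ℂ := (exists_cubeRoot_re_ge v).choose

lemma cubeChoice_pow (v : ℂ) : cubeChoice v ^ 3 = 1 := (exists_cubeRoot_re_ge v).choose_spec.1

lemma norm_cubeChoice (v : ℂ) : ‖cubeChoice v‖ = 1 :=
  Complex.norm_eq_one_of_pow_eq_one (cubeChoice_pow v) (by norm_num)

/-- Subtracting `L` in the chosen direction decreases the modulus by `L / 4`, unless the result is
already of size `2 L`. -/
lemma norm_sub_cubeChoice_le (v : ℂ) {L : ℝ} (hL : 0 ≤ L) :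
    ‖v - cubeChoice v * L‖ ≤ max (2 * L) (‖v‖ - L / 4) := by
  have h1 : ‖v‖ / 2 ≤ (v * (starRingEnd ℂ) (cubeChoice v)).re :=
    (exists_cubeRoot_re_ge v).choose_spec.2
  have h2 : ‖v - cubeChoice v * L‖ ^ 2 ≤ ‖v‖ ^ 2 - L * ‖v‖ + L ^ 2 := by
    rw [Complex.sq_norm, Complex.normSq_sub, ← Complex.sq_norm, ← Complex.sq_norm, norm_mul,
      norm_cubeChoice, Complex.norm_real, Real.norm_of_nonneg hL, map_mul, Complex.conj_ofReal,
      ← mul_assoc, Complex.re_mul_ofReal]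
    nlinarith
  have hv := norm_nonneg v
  rcases le_total (2 * L) ‖v‖ with h | h
  · refine le_max_of_le_right (le_of_sq_le_sq (h2.trans ?_) (by linarith))
    nlinarith
  · refine le_max_of_le_left (le_of_sq_le_sq (h2.trans ?_) (by linarith))
    nlinarith

/-- The greedy partial sums `∑_{p ≤ n} c_p log p` approximating `Φ n`: at each prime `p` the cube
root of unity `c_p` is chosen in the direction of the current error. -/
noncomputable def greedySum (Φ : ℕ → ℂ) : ℕ → ℂ
  | 0 => 0
  | n + 1 => greedySum Φ n + if (n + 1).Prime then
      cubeChoice (Φ (n + 1) - greedySum Φ n) * (Real.log (n + 1 : ℕ) : ℂ) else 0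

lemma theta_succ (n : ℕ) : Chebyshev.theta ((n + 1 : ℕ) : ℝ) =
    Chebyshev.theta (n : ℝ) + if (n + 1).Prime then Real.log (n + 1 : ℕ) else 0 := by
  simp only [Chebyshev.theta, Nat.floor_natCast, Finset.sum_filter]
  rw [Finset.sum_Ioc_succ_top (Nat.zero_le n)]

/-- The index `m` is the last time the error was reset to at most `2 log p`; from then on the drift
`‖Φ (k + 1) - Φ k‖` is compensated by a quarter of the prime weights. -/
lemma norm_greedy_error_le (Φ : ℕ → ℂ) (n : ℕ) : ∃ m ≤ n,
    ‖Φ n - greedySum Φ n‖ ≤ ‖Φ 0‖ + 2 * Real.log n +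
      ∑ k ∈ Finset.Ico m n, ‖Φ (k + 1) - Φ k‖ -
      (Chebyshev.theta n - Chebyshev.theta m) / 4 := by
  induction n with
  | zero => exact ⟨0, le_rfl, by simp [greedySum]⟩
  | succ n ih =>
    obtain ⟨m, hm, h⟩ := ih
    have hlog : Real.log n ≤ Real.log (n + 1 : ℕ) := by
      rcases Nat.eq_zero_or_pos n with rfl | hn
      · simp
      · exact Real.log_le_log (by exact_mod_cast hn) (by exact_mod_cast Nat.le_succ n)
    have hlog0 : 0 ≤ Real.log (n + 1 : ℕ) := Real.log_natCast_nonneg _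
    have hv : ‖Φ (n + 1) - greedySum Φ n‖ ≤ ‖Φ n - greedySum Φ n‖ + ‖Φ (n + 1) - Φ n‖ := by
      refine le_trans (le_of_eq ?_) (norm_add_le _ _)
      congr 1
      ring
    have hΦ := norm_nonneg (Φ 0)
    rw [greedySum]
    by_cases hp : (n + 1).Prime
    · rw [if_pos hp, ← sub_sub]
      have hstep := norm_sub_cubeChoice_le (Φ (n + 1) - greedySum Φ n) hlog0
      rcases le_max_iff.1 hstep with h1 | h1
      · exact ⟨n + 1, le_rfl, by simp only [Finset.Ico_self, Finset.sum_empty, sub_self]; linarith⟩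
      · refine ⟨m, by omega, ?_⟩
        rw [Finset.sum_Ico_succ_top hm, theta_succ, if_pos hp]
        linarith
    · rw [if_neg hp, add_zero]
      refine ⟨m, by omega, ?_⟩
      rw [Finset.sum_Ico_succ_top hm, theta_succ, if_neg hp]
      linarith

/-- If the increments of `Φ` are eventually at most `1/4`, the drift `(n - m) / 4` is cancelled by
`(θ(n) - θ(m)) / 4` up to the error term of the prime number theorem on RH. -/
lemma norm_greedy_error_le_rpow (hRH : RiemannHypothesis) (Φ : ℕ → ℂ)
    (hΦ : ∀ᶠ k in atTop, ‖Φ (k + 1) - Φ k‖ ≤ 1 / 4) {ε : ℝ} (hε : 0 < ε) (hε1 : ε ≤ 1) :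
    ∃ K : ℝ, 0 < K ∧ ∀ n : ℕ, 1 ≤ n → ‖Φ n - greedySum Φ n‖ ≤ K * (n : ℝ) ^ (1 / 2 + ε) := by
  obtain ⟨N, hN⟩ := eventually_atTop.1 hΦ
  obtain ⟨C, hC, hθ⟩ := abs_theta_sub_le hRH hε hε1
  set K₁ := ∑ k ∈ Finset.range N, ‖Φ (k + 1) - Φ k‖ with hK₁
  have hK₁0 : 0 ≤ K₁ := Finset.sum_nonneg fun _ _ => norm_nonneg _
  refine ⟨‖Φ 0‖ + K₁ + 4 + C, by positivity, fun n hn => ?_⟩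
  have hn1 : (1 : ℝ) ≤ n := by exact_mod_cast hn
  obtain ⟨m, hm, h⟩ := norm_greedy_error_le Φ n
  have hsum : ∑ k ∈ Finset.Ico m n, ‖Φ (k + 1) - Φ k‖ ≤ ((n : ℝ) - m) / 4 + K₁ := by
    calc _ ≤ ∑ k ∈ Finset.Ico m n, (1 / 4 + if k < N then ‖Φ (k + 1) - Φ k‖ else 0) := by
          refine Finset.sum_le_sum fun k _ => ?_
          split_ifs with hk
          · linarith
          · linarith [hN k (not_lt.1 hk)]
      _ = ((n : ℝ) - m) / 4 +
          ∑ k ∈ Finset.Ico m n with k < N, ‖Φ (k + 1) - Φ k‖ := by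
          rw [Finset.sum_add_distrib, Finset.sum_const, Nat.card_Ico, nsmul_eq_mul,
            Nat.cast_sub hm, Finset.sum_filter]
          ring
      _ ≤ _ := by
          gcongr
          refine Finset.sum_le_sum_of_subset_of_nonneg (fun k hk => ?_) fun _ _ _ => norm_nonneg _
          exact Finset.mem_range.2 (Finset.mem_filter.1 hk).2
  set P := (n : ℝ) ^ (1 / 2 + ε) with hP
  have hP1 : 1 ≤ P := Real.one_le_rpow hn1 (by linarith)
  have hθn := abs_le.1 (hθ n hn1)
  have hθm : |Chebyshev.theta m - m| ≤ C * P := by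
    rcases Nat.eq_zero_or_pos m with rfl | hm0
    · simp [Chebyshev.theta_eq_zero_of_lt_two]
      positivity
    · refine (hθ m (by exact_mod_cast hm0)).trans ?_
      rw [hP]
      gcongr
  have hθm' := abs_le.1 hθm
  have hlog : Real.log n ≤ 2 * P := by
    refine (Real.log_le_rpow_div (by linarith) (by linarith : 0 < 1 / 2 + ε)).trans ?_
    rw [div_le_iff₀ (by linarith), ← hP]
    nlinarith
  have h7 : ‖Φ 0‖ + K₁ ≤ (‖Φ 0‖ + K₁) * P := le_mul_of_one_le_right (by positivity) hP1
  nlinarith [hθn.1, hθm'.2]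

/-- The completely multiplicative extension of a function on primes, with value `0` at `0`. -/
noncomputable def multExt (c : ℕ → ℂ) (n : ℕ) : ℂ :=
  if n = 0 then 0 else (n.primeFactorsList.map c).prod

lemma completelyMultiplicative_multExt (c : ℕ → ℂ) : CompletelyMultiplicative (multExt c) := by
  refine ⟨by simp [multExt], fun m n => ?_⟩
  rcases eq_or_ne m 0 with rfl | hm
  · simp [multExt]
  rcases eq_or_ne n 0 with rfl | hn
  · simp [multExt]
  rw [multExt, multExt, multExt, if_neg hm, if_neg hn, if_neg (mul_ne_zero hm hn),
    ((Nat.perm_primeFactorsList_mul hm hn).map c).prod_eq, List.map_append, List.prod_append]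

lemma multExt_prime (c : ℕ → ℂ) {p : ℕ} (hp : p.Prime) : multExt c p = c p := by
  rw [multExt, if_neg hp.ne_zero, Nat.primeFactorsList_prime hp]
  simp

lemma multExt_pow_three {c : ℕ → ℂ} (hc : ∀ n, c n ^ 3 = 1) {n : ℕ} (hn : n ≠ 0) :
    multExt c n ^ 3 = 1 := by
  rw [multExt, if_neg hn]
  induction n.primeFactorsList with
  | nil => simp
  | cons a l ih => rw [List.map_cons, List.prod_cons, mul_pow, hc, ih, one_mul]

lemma mem_cubeRoots {z : ℂ} (hz : z ^ 3 = 1) :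
    z ∈ ({1, Complex.exp (2 * Real.pi * Complex.I / 3),
          Complex.exp (-(2 * Real.pi * Complex.I) / 3)} : Set ℂ) := by
  have h := Complex.isPrimitiveRoot_exp 3 (by norm_num)
  obtain ⟨i, hi, rfl⟩ := h.eq_pow_of_pow_eq_one hz
  have he : Complex.exp (-(2 * Real.pi * Complex.I) / 3) =
      Complex.exp (2 * Real.pi * Complex.I / 3) ^ 2 := by
    rw [← Complex.exp_nat_mul]
    refine Complex.exp_eq_exp_iff_exists_int.2 ⟨-1, ?_⟩
    push_cast
    ring
  rw [he]
  push_cast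
  interval_cases i <;> simp

/-! ### Partial summation -/

lemma integral_mul_cpow_by_parts {Q : ℝ → ℂ} (hQ : Continuous Q) {M : ℝ} (hM : ∀ x, ‖Q x‖ ≤ M)
    {s : ℂ} (hs : 1 < s.re) :
    ∫ x in Ioi (1 : ℝ), Q x * (x : ℂ) ^ (-s) =
      s * ∫ x in Ioi (1 : ℝ), (∫ t in (1 : ℝ)..x, Q t) * (x : ℂ) ^ (-(s + 1)) := by
  have hM0 : 0 ≤ M := (norm_nonneg _).trans (hM 0)
  have hs0 : s ≠ 0 := by rintro rfl; simp at hs; linarith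
  set Φ : ℝ → ℂ := fun x => ∫ t in (1 : ℝ)..x, Q t with hΦ
  have hΦd : ∀ x, HasDerivAt Φ (Q x) x := fun x => (hQ.integral_hasStrictDerivAt 1 x).hasDerivAt
  have hΦc : Continuous Φ := continuous_iff_continuousAt.2 fun x => (hΦd x).continuousAt
  have hΦb : ∀ x, 1 ≤ x → ‖Φ x‖ ≤ M * x := by
    intro x hx
    refine (intervalIntegral.norm_integral_le_of_norm_le_const fun t _ => hM t).trans ?_
    rw [abs_of_nonneg (by linarith)]
    nlinarith
  have hi1 : IntegrableOn (fun x : ℝ => Q x * (x : ℂ) ^ (-s)) (Ioi 1) := by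
    have := integrableOn_mul_cpow hQ.measurable (C := M) (a := 0) (s := s - 1)
      (fun t _ => by simpa using hM t) (by simpa using hs)
    simpa using this
  have hi2 : IntegrableOn (fun x : ℝ => Φ x * (x : ℂ) ^ (-(s + 1))) (Ioi 1) :=
    integrableOn_mul_cpow hΦc.measurable (C := M) (a := 1) (fun t ht => by simpa using hΦb t ht) hs
  have hd : ∀ x ∈ Ici (1 : ℝ), HasDerivAt (fun x : ℝ => Φ x * (x : ℂ) ^ (-s))
      (Q x * (x : ℂ) ^ (-s) - s * (Φ x * (x : ℂ) ^ (-(s + 1)))) x := by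
    intro x hx
    have hx0 : x ≠ 0 := (lt_of_lt_of_le one_pos hx).ne'
    have h1 : HasDerivAt (fun y : ℝ => (y : ℂ) ^ (-s)) ((-s) * (x : ℂ) ^ (-(s + 1))) x := by
      have := (hasDerivAt_ofReal_cpow_const' (r := -(s + 1)) hx0 (by
        intro h; apply hs0; linear_combination -h)).const_mul (-s)
      refine this.congr_of_eventuallyEq (Eventually.of_forall fun u => ?_)
      have h2 : -(s + 1) + 1 = -s := by ring
      simp only [h2]
      exact (mul_div_cancel₀ _ (neg_ne_zero.2 hs0)).symm
    refine ((hΦd x).mul h1).congr_deriv ?_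
    ring
  have hlim : Tendsto (fun x : ℝ => Φ x * (x : ℂ) ^ (-s)) atTop (nhds 0) := by
    have h1 : Tendsto (fun x : ℝ => M * x ^ (-(s.re - 1))) atTop (nhds 0) := by
      simpa using (tendsto_rpow_neg_atTop (by linarith : 0 < s.re - 1)).const_mul M
    refine squeeze_zero_norm' ?_ h1
    filter_upwards [eventually_ge_atTop 1] with x hx
    have hx0 : 0 < x := by linarith
    rw [norm_mul, Complex.norm_cpow_eq_rpow_re_of_pos hx0, Complex.neg_re]
    calc _ ≤ M * x * x ^ (-s.re) := by gcongr; exact hΦb x hx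
      _ = M * (x ^ (1 : ℝ) * x ^ (-s.re)) := by rw [Real.rpow_one]; ring
      _ = _ := by rw [← Real.rpow_add hx0]; ring_nf
  have h := integral_Ioi_of_hasDerivAt_of_tendsto' hd (hi1.sub (hi2.const_mul s)) hlim
  rw [integral_sub hi1 (hi2.const_mul s), integral_const_mul] at h
  have h0 : Φ 1 = 0 := by simp [hΦ]
  rw [h0, zero_mul, sub_zero, sub_eq_zero] at h
  exact h

lemma prime_tsum_eq_LSeries (χ : ℕ → ℂ) (s : ℂ) :
    ∑' p : Nat.Primes, χ p * (p : ℂ) ^ (-s) * (Real.log p : ℂ) =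
      LSeries (fun n => if n.Prime then χ n * (Real.log n : ℂ) else 0) s := by
  have h := tsum_subtype {p : ℕ | p.Prime} fun n : ℕ => χ n * (n : ℂ) ^ (-s) * (Real.log n : ℂ)
  refine Eq.trans h ?_
  rw [LSeries]
  refine tsum_congr fun n => ?_
  by_cases hn : n.Prime
  · rw [indicator_of_mem (show n ∈ {p : ℕ | p.Prime} from hn), LSeries.term_of_ne_zero hn.ne_zero,
      if_pos hn, Complex.cpow_neg]
    ring
  · rw [indicator_of_notMem (show n ∉ {p : ℕ | p.Prime} from hn), LSeries.term_def]
    simp [hn]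

lemma sum_eq_greedySum {Φ : ℕ → ℂ} {χ : ℕ → ℂ}
    (hχ : ∀ n : ℕ, (n + 1).Prime → χ (n + 1) = cubeChoice (Φ (n + 1) - greedySum Φ n)) (n : ℕ) :
    ∑ k ∈ Finset.Icc 1 n, (if k.Prime then χ k * (Real.log k : ℂ) else 0) = greedySum Φ n := by
  induction n with
  | zero => simp [greedySum]
  | succ n ih =>
    rw [Finset.sum_Icc_succ_top (by omega), ih, greedySum]
    congr 1
    split_ifs with hp
    · rw [hχ n hp]
    · rfl

/-- Abel summation for the prime sum in `Re s > 1`. -/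
lemma prime_tsum_eq_integral {Φ : ℕ → ℂ} {χ : ℕ → ℂ}
    (hχ : ∀ n : ℕ, (n + 1).Prime → χ (n + 1) = cubeChoice (Φ (n + 1) - greedySum Φ n))
    {s : ℂ} (hs : 1 < s.re) :
    ∑' p : Nat.Primes, χ p * (p : ℂ) ^ (-s) * (Real.log p : ℂ) =
      s * ∫ t in Ioi (1 : ℝ), greedySum Φ ⌊t⌋₊ * (t : ℂ) ^ (-(s + 1)) := by
  rw [prime_tsum_eq_LSeries, LSeries_eq_mul_integral' _ zero_le_one hs]
  · simp only [sum_eq_greedySum hχ]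
  · have hle : ∀ n : ℕ, ∑ k ∈ Finset.Icc 1 n,
        ‖if k.Prime then χ k * (Real.log k : ℂ) else 0‖ = Chebyshev.theta n := by
      intro n
      rw [Chebyshev.theta, Nat.floor_natCast, Finset.sum_filter]
      refine Finset.sum_congr rfl fun k hk => ?_
      split_ifs with hp
      · obtain ⟨m, rfl⟩ : ∃ m, k = m + 1 := ⟨k - 1, by have := hp.pos; omega⟩
        rw [norm_mul, hχ m hp, norm_cubeChoice, one_mul, Complex.norm_real,
          Real.norm_of_nonneg (Real.log_natCast_nonneg _)]
      · simp
    simp only [hle]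
    refine Asymptotics.IsBigO.of_bound (Real.log 4) (Eventually.of_forall fun n => ?_)
    rw [Real.norm_of_nonneg (Chebyshev.theta_nonneg _), Real.rpow_one, Real.norm_natCast]
    exact Chebyshev.theta_le_log4_mul_x (Nat.cast_nonneg n)

theorem mellin_minus_prime_sum_extends_cubic_RH
    (hRH : RiemannHypothesis)
    (q : ℝ → ℂ) (hq : ContinuousOn q (Set.Ici 1))
    (hq0 : Tendsto q atTop (nhds 0)) :
    ∃ χ : ℕ → ℂ,
      CompletelyMultiplicative χ ∧
      (∀ n : ℕ, 1 ≤ n → χ n ∈ ({1, Complex.exp (2 * Real.pi * Complex.I / 3),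
          Complex.exp (-(2 * Real.pi * Complex.I) / 3)} : Set ℂ)) ∧
      ∃ G : ℂ → ℂ, AnalyticOnNhd ℂ G {s : ℂ | 1 / 2 < s.re} ∧
        ∀ s : ℂ, 1 < s.re →
          G s = (∫ x in Set.Ioi (1 : ℝ), q x * (x : ℂ) ^ (-s)) -
            ∑' p : Nat.Primes, χ p * (p : ℂ) ^ (-s) * (Real.log p : ℂ) := by
  -- `Q` extends `q` from `[1, ∞)` to a bounded continuous function on the line
  set Q : ℝ → ℂ := fun x => q (max x 1) with hQdef
  have hQ : Continuous Q := hq.comp_continuous (by fun_prop) fun x => le_max_right x 1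
  have hQq : ∀ x, 1 ≤ x → Q x = q x := fun x hx => by simp only [hQdef, max_eq_left hx]
  obtain ⟨X, hX⟩ := eventually_atTop.1
    ((tendsto_zero_iff_norm_tendsto_zero.1 hq0).eventually
      (ge_mem_nhds (by norm_num : (0 : ℝ) < 1 / 4)))
  obtain ⟨M, hM⟩ : ∃ M : ℝ, ∀ x, ‖Q x‖ ≤ M := by
    obtain ⟨B, hB⟩ := (isCompact_Icc (a := (1 : ℝ)) (b := max X 1)).exists_bound_of_continuousOn
      (hq.mono Icc_subset_Ici_self)
    refine ⟨max B (1 / 4), fun x => ?_⟩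
    rcases le_total (max x 1) (max X 1) with h | h
    · exact (hB _ ⟨le_max_right _ _, h⟩).trans (le_max_left _ _)
    · exact (hX _ ((le_max_left _ _).trans h)).trans (le_max_right _ _)
  have hM0 : 0 ≤ M := (norm_nonneg _).trans (hM 0)
  set Φ : ℝ → ℂ := fun x => ∫ t in (1 : ℝ)..x, Q t with hΦ
  have hΦc : Continuous Φ :=
    continuous_iff_continuousAt.2 fun x => (hQ.integral_hasStrictDerivAt 1 x).hasDerivAt.continuousAt
  have hΦsub : ∀ x y, Φ y - Φ x = ∫ t in x..y, Q t := fun x y =>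
    intervalIntegral.integral_interval_sub_left (hQ.intervalIntegrable _ _)
      (hQ.intervalIntegrable _ _)
  set Ψ : ℕ → ℂ := fun n => Φ n with hΨ
  have hΨs : ∀ᶠ k in atTop, ‖Ψ (k + 1) - Ψ k‖ ≤ 1 / 4 := by
    filter_upwards [eventually_ge_atTop (max ⌈X⌉₊ 1)] with k hk
    have hkX : X ≤ k := Nat.ceil_le.1 ((le_max_left _ _).trans hk)
    have hk1 : (1 : ℝ) ≤ k := by exact_mod_cast (le_max_right _ _).trans hk
    have h1 : Ψ (k + 1) - Ψ k = ∫ t in (k : ℝ)..((k + 1 : ℕ) : ℝ), Q t := hΦsub _ _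
    rw [h1]
    refine (intervalIntegral.norm_integral_le_of_norm_le_const (C := 1 / 4) fun t ht => ?_).trans ?_
    · rw [uIoc_of_le (by push_cast; linarith)] at ht
      rw [hQq t (by linarith [ht.1])]
      exact hX t (by linarith [ht.1])
    · push_cast; simp
  set c : ℕ → ℂ := fun p => cubeChoice (Ψ p - greedySum Ψ (p - 1)) with hc
  have hχ : ∀ n : ℕ, (n + 1).Prime →
      multExt c (n + 1) = cubeChoice (Ψ (n + 1) - greedySum Ψ n) := fun n hn => by
    rw [multExt_prime c hn]; simp [hc]
  -- the error function, whose growth rate governs the half-plane of continuation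
  set D : ℝ → ℂ := fun t => Φ t - greedySum Ψ ⌊t⌋₊ with hD
  have hDm : Measurable D :=
    hΦc.measurable.sub ((measurable_from_top (f := greedySum Ψ)).comp Nat.measurable_floor)
  have hDb : ∀ ε : ℝ, 0 < ε → ε ≤ 1 → ∃ K : ℝ, ∀ t : ℝ, 1 ≤ t → ‖D t‖ ≤ K * t ^ (1 / 2 + ε) := by
    intro ε hε hε1
    obtain ⟨K, hK, h⟩ := norm_greedy_error_le_rpow hRH Ψ hΨs hε hε1
    refine ⟨M + K, fun t ht => ?_⟩
    have hn1 : 1 ≤ ⌊t⌋₊ := (Nat.one_le_floor_iff t).2 ht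
    have hfl : (⌊t⌋₊ : ℝ) ≤ t := Nat.floor_le (by linarith)
    have hfl' := Nat.lt_floor_add_one t
    have h1 : D t = (Φ t - Φ ⌊t⌋₊) + (Ψ ⌊t⌋₊ - greedySum Ψ ⌊t⌋₊) := by
      simp only [hD, hΨ]; ring
    have h2 : ‖Φ t - Φ ⌊t⌋₊‖ ≤ M := by
      rw [hΦsub]
      refine (intervalIntegral.norm_integral_le_of_norm_le_const fun u _ => hM u).trans ?_
      refine mul_le_of_le_one_right hM0 ?_
      rw [abs_of_nonneg (by linarith)]
      linarith
    have h3 : 1 ≤ t ^ (1 / 2 + ε) := Real.one_le_rpow ht (by linarith)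
    have h4 : K * (⌊t⌋₊ : ℝ) ^ (1 / 2 + ε) ≤ K * t ^ (1 / 2 + ε) := by gcongr
    rw [h1, add_mul]
    refine (norm_add_le _ _).trans (add_le_add ?_ ((h _ hn1).trans h4))
    exact h2.trans (le_mul_of_one_le_right hM0 h3)
  refine ⟨multExt c, completelyMultiplicative_multExt c, fun n hn => mem_cubeRoots
    (multExt_pow_three (fun _ => cubeChoice_pow _) (by omega)),
    fun s => s * ∫ t in Ioi (1 : ℝ), D t * (t : ℂ) ^ (-(s + 1)), ?_, fun s hs => ?_⟩
  · refine DifferentiableOn.analyticOnNhd (fun s hs => ?_)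
      (isOpen_lt continuous_const Complex.continuous_re)
    have hs' : 1 / 2 < s.re := hs
    obtain ⟨K, hK⟩ := hDb (min 1 ((s.re - 1 / 2) / 2)) (lt_min one_pos (by linarith))
      (min_le_left _ _)
    have := min_le_right 1 ((s.re - 1 / 2) / 2)
    exact (differentiableAt_id.mul
      (differentiableAt_integral_mul_cpow hDm hK (by linarith))).differentiableWithinAt
  · obtain ⟨K, hK⟩ := hDb (1 / 2) (by norm_num) (by norm_num)
    have hDi := integrableOn_mul_cpow hDm hK (s := s) (by linarith)
    have hΦi : IntegrableOn (fun t : ℝ => Φ t * (t : ℂ) ^ (-(s + 1))) (Ioi 1) := by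
      refine integrableOn_mul_cpow hΦc.measurable (C := M) (a := 1) (fun t ht => ?_) hs
      refine (intervalIntegral.norm_integral_le_of_norm_le_const fun u _ => hM u).trans ?_
      rw [abs_of_nonneg (by linarith), Real.rpow_one]
      nlinarith
    have hq' : ∫ x in Ioi (1 : ℝ), q x * (x : ℂ) ^ (-s) =
        ∫ x in Ioi (1 : ℝ), Q x * (x : ℂ) ^ (-s) :=
      setIntegral_congr_fun measurableSet_Ioi fun x hx => by
        simp only [hQq x (le_of_lt hx)]
    rw [hq', integral_mul_cpow_by_parts hQ hM hs, prime_tsum_eq_integral hχ hs, ← mul_sub]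
    have hS : ∀ t : ℝ, greedySum Ψ ⌊t⌋₊ * (t : ℂ) ^ (-(s + 1)) =
        Φ t * (t : ℂ) ^ (-(s + 1)) - D t * (t : ℂ) ^ (-(s + 1)) := by
      intro t
      simp only [hD]
      ring
    simp only [hS]
    rw [integral_sub hΦi hDi]
    ring
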